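/- If (G, S, L) is a canvas and S is a path of length one, then G has an L-coloring. -/

import Mathlib

/-!
Common definitions: plane graphs (given by a concrete embedding in the plane),
outer face, canvases, list colorings, governments, harmonicas and coloring
harmonicas, following Postle–Thomas,
"Five-list-coloring graphs on surfaces III".
-/

open Set

universe u

/-- A finite simple graph together with an embedding in the plane:
each vertex gets a point, each edge a simple arc joining its endpoints;
arcs avoid other vertices, and two distinct edges meet only in common
endpoints. -/
structure PlaneGraph (V : Type u) where
  verts : Set V
  Adj : V → V → Prop
  finite_verts : verts.Finite
  adj_symm : ∀ u v, Adj u v → Adj v u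
  adj_irrefl : ∀ v, ¬Adj v v
  adj_mem : ∀ u v, Adj u v → u ∈ verts
  pos : V → ℝ × ℝ
  arc : Sym2 V → Set (ℝ × ℝ)
  pos_injOn : Set.InjOn pos verts
  arc_arc : ∀ u v, Adj u v → ∃ f : ℝ → ℝ × ℝ,
    ContinuousOn f (Set.Icc 0 1) ∧ Set.InjOn f (Set.Icc 0 1) ∧
    f '' Set.Icc 0 1 = arc s(u, v) ∧ f 0 = pos u ∧ f 1 = pos v
  arc_avoid : ∀ u v, Adj u v → ∀ w ∈ verts, pos w ∈ arc s(u, v) → w = u ∨ w = v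
  arc_meet : ∀ u v x y, Adj u v → Adj x y → s(u, v) ≠ s(x, y) →
    arc s(u, v) ∩ arc s(x, y) ⊆ pos '' (({u, v} : Set V) ∩ ({x, y} : Set V))

namespace PlaneGraph

variable {V : Type u}

/-- The point set of the drawing of the plane graph. -/
def image (G : PlaneGraph V) : Set (ℝ × ℝ) :=
  G.pos '' G.verts ∪ ⋃ (u : V) (v : V) (_ : G.Adj u v), G.arc s(u, v)

/-- The outer (unbounded) face of the drawing. -/
def outerFace (G : PlaneGraph V) : Set (ℝ × ℝ) :=
  {p | p ∉ G.image ∧ ¬Bornology.IsBounded (connectedComponentIn G.imageᶜ p)}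

/-- A vertex incident with (i.e. on the boundary of) the outer face. -/
def OnOuter (G : PlaneGraph V) (v : V) : Prop := G.pos v ∈ frontier G.outerFace

/-- An edge incident with (i.e. on the boundary of) the outer face. -/
def EdgeOnOuter (G : PlaneGraph V) (u v : V) : Prop :=
  G.arc s(u, v) ⊆ frontier G.outerFace

/-- The vertices of the boundary of the outer face. -/
def boundaryVerts (G : PlaneGraph V) : Set V := {v | v ∈ G.verts ∧ G.OnOuter v}

/-- Connectivity of a plane graph. -/
def Connected (G : PlaneGraph V) : Prop :=
  G.verts.Nonempty ∧ ∀ u ∈ G.verts, ∀ v ∈ G.verts, Relation.ReflTransGen G.Adj u v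

/-- `H` is a (plane) subgraph of `G`, drawn the same way. -/
def IsSubgraph (H G : PlaneGraph V) : Prop :=
  H.verts ⊆ G.verts ∧ (∀ u v, H.Adj u v → G.Adj u v) ∧
  (∀ v ∈ H.verts, H.pos v = G.pos v) ∧
  (∀ u v, H.Adj u v → H.arc s(u, v) = G.arc s(u, v))

/-- Delete a set of vertices (and all incident edges) from a plane graph. -/
def deleteVerts (G : PlaneGraph V) (s : Set V) : PlaneGraph V where
  verts := G.verts \ s
  Adj u v := G.Adj u v ∧ u ∉ s ∧ v ∉ s
  finite_verts := G.finite_verts.subset Set.diff_subset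
  adj_symm := fun u v h => ⟨G.adj_symm u v h.1, h.2.2, h.2.1⟩
  adj_irrefl := fun v h => G.adj_irrefl v h.1
  adj_mem := fun u v h => ⟨G.adj_mem u v h.1, h.2.1⟩
  pos := G.pos
  arc := G.arc
  pos_injOn := G.pos_injOn.mono Set.diff_subset
  arc_arc := fun u v h => G.arc_arc u v h.1
  arc_avoid := fun u v h w hw hm => G.arc_avoid u v h.1 w hw.1 hm
  arc_meet := fun u v x y h h' hne => G.arc_meet u v x y h.1 h'.1 hne

/-- `G` has a proper coloring from the lists `L`. -/
def HasLColoring (G : PlaneGraph V) (L : V → Finset ℕ) : Prop :=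
  ∃ φ : V → ℕ, (∀ v ∈ G.verts, φ v ∈ L v) ∧ ∀ u v, G.Adj u v → φ u ≠ φ v

/-- A vertex of degree exactly one. -/
def DegreeOne (G : PlaneGraph V) (x : V) : Prop :=
  (∃ a, G.Adj x a) ∧ ∀ a b, G.Adj x a → G.Adj x b → a = b

end PlaneGraph

/-- The cyclic successor of an index in a list. -/
def cycNext {V : Type u} (C : List V) (i : Fin C.length) : Fin C.length :=
  ⟨((i : ℕ) + 1) % C.length, Nat.mod_lt _ (lt_of_le_of_lt (Nat.zero_le _) i.isLt)⟩

/-- The list `C` is a cycle of `G` whose image is exactly the boundary of the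
outer face of `G`; i.e. `G` is a plane graph with outer cycle `C`. -/
def PlaneGraph.IsOuterCycle {V : Type u} (G : PlaneGraph V) (C : List V) : Prop :=
  C.Nodup ∧ 3 ≤ C.length ∧ (∀ v ∈ C, v ∈ G.verts) ∧
  (∀ i : Fin C.length, G.Adj (C.get i) (C.get (cycNext C i))) ∧
  frontier G.outerFace =
    G.pos '' {v | v ∈ C} ∪ ⋃ i : Fin C.length, G.arc s(C.get i, C.get (cycNext C i))

/-- `pq` is an edge of the cycle (given as a list) `C`. -/
def IsCycleEdge {V : Type u} (C : List V) (p q : V) : Prop :=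
  ∃ i : Fin C.length, s(p, q) = s(C.get i, C.get (cycNext C i))

/-- `(G, S, L)` is a canvas, where the subgraph `S` of the boundary of the
outer face of `G` is given by its vertex set `Sverts` and adjacency `SAdj`. -/
structure IsCanvas {V : Type u} (G : PlaneGraph V) (Sverts : Set V) (SAdj : V → V → Prop)
    (L : V → Finset ℕ) : Prop where
  sadj_symm : ∀ u v, SAdj u v → SAdj v u
  sadj_sub : ∀ u v, SAdj u v → G.Adj u v
  sadj_mem : ∀ u v, SAdj u v → u ∈ Sverts
  sverts_sub : Sverts ⊆ G.verts
  sverts_outer : ∀ v ∈ Sverts, G.OnOuter v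
  sedges_outer : ∀ u v, SAdj u v → G.EdgeOnOuter u v
  lists_nonempty : ∀ v ∈ G.verts, (L v).Nonempty
  card_inner : ∀ v ∈ G.verts, ¬G.OnOuter v → 5 ≤ (L v).card
  card_outside_S : ∀ v ∈ G.verts, v ∉ Sverts → 3 ≤ (L v).card
  scolorable : ∃ φ : V → ℕ, (∀ v ∈ Sverts, φ v ∈ L v) ∧ ∀ u v, SAdj u v → φ u ≠ φ v

/-- The adjacency relation of the single-edge path `p₁p₂`. -/
def pathAdj {V : Type u} (p1 p2 : V) : V → V → Prop :=
  fun u v => (u = p1 ∧ v = p2) ∨ (u = p2 ∧ v = p1)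

/-- `(G, P, L)` is a canvas whose precolored subgraph is a path `P = p₁p₂` of
length one (in the boundary of the outer face of `G`). -/
def IsPathCanvas {V : Type u} (G : PlaneGraph V) (p1 p2 : V) (L : V → Finset ℕ) : Prop :=
  p1 ≠ p2 ∧ IsCanvas G {p1, p2} (pathAdj p1 p2) L

/-- `c = (c₁, c₂)` is a proper `L`-coloring of the edge `p₁p₂`. -/
def ProperEdgeColoring {V : Type u} (L : V → Finset ℕ) (p1 p2 : V) (c : ℕ × ℕ) : Prop :=
  c.1 ∈ L p1 ∧ c.2 ∈ L p2 ∧ c.1 ≠ c.2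

/-- `Φ_T(P', 𝒞)`: the colorings of the edge `q₁q₂` extendable to an `L`-coloring
of `G` whose restriction to `p₁p₂` lies in `C`. -/
def Phi {V : Type u} (G : PlaneGraph V) (L : V → Finset ℕ) (p1 p2 q1 q2 : V)
    (C : Set (ℕ × ℕ)) : Set (ℕ × ℕ) :=
  {c | ∃ φ : V → ℕ, (∀ v ∈ G.verts, φ v ∈ L v) ∧ (∀ u v, G.Adj u v → φ u ≠ φ v) ∧
    (φ p1, φ p2) ∈ C ∧ φ q1 = c.1 ∧ φ q2 = c.2}

/-- The set of colors used on the first vertex of the path. -/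
def fstColors (C : Set (ℕ × ℕ)) : Set ℕ := Prod.fst '' C

/-- The set of colors used on the second vertex of the path. -/
def sndColors (C : Set (ℕ × ℕ)) : Set ℕ := Prod.snd '' C

/-- A dictatorship: at least two (distinct) colorings, all agreeing on one of
the two vertices (the dictator). -/
def IsDictatorship (C : Set (ℕ × ℕ)) : Prop :=
  (∃ c ∈ C, ∃ d ∈ C, c ≠ d) ∧
  ((∃ a, ∀ c ∈ C, c.1 = a) ∨ (∃ a, ∀ c ∈ C, c.2 = a))

/-- A democracy: exactly the two colorings `(x, y)` and `(y, x)`. -/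
def IsDemocracy (C : Set (ℕ × ℕ)) : Prop :=
  ∃ x y : ℕ, x ≠ y ∧ C = {(x, y), (y, x)}

/-- A government is a dictatorship or a democracy. -/
def IsGovernment (C : Set (ℕ × ℕ)) : Prop := IsDictatorship C ∨ IsDemocracy C

/-- A confederacy: not a government, but the union of two governments. -/
def IsConfederacy (C : Set (ℕ × ℕ)) : Prop :=
  ¬IsGovernment C ∧ ∃ C1 C2 : Set (ℕ × ℕ), IsGovernment C1 ∧ IsGovernment C2 ∧ C = C1 ∪ C2

/-- The canvas `(G, p₁p₂, L)` is a harmonica from the path `p₁p₂` to the path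
`q₁q₂` with government `C`. -/
inductive IsHarmonica {V : Type u} (L : V → Finset ℕ) :
    PlaneGraph V → V → V → V → V → Set (ℕ × ℕ) → Prop where
  /-- Rule (i): `G = P = P'`. -/
  | same (G : PlaneGraph V) (p1 p2 q1 q2 : V) (C : Set (ℕ × ℕ))
      (hcanvas : IsPathCanvas G p1 p2 L)
      (hproper : ∀ c ∈ C, ProperEdgeColoring L p1 p2 c)
      (hgov : IsGovernment C)
      (hq : (q1 = p1 ∧ q2 = p2) ∨ (q1 = p2 ∧ q2 = p1))
      (hverts : G.verts = {p1, p2})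
      (hedges : ∀ u v, G.Adj u v → pathAdj p1 p2 u v) :
      IsHarmonica L G p1 p2 q1 q2 C
  /-- Rule (ii): `C` is a dictatorship, `G = P ∪ P'`, `V(P) ∩ V(P') = {z}`
  where `z` is the dictator. -/
  | cherry (G : PlaneGraph V) (p1 p2 q1 q2 z : V) (C : Set (ℕ × ℕ))
      (hcanvas : IsPathCanvas G p1 p2 L)
      (hproper : ∀ c ∈ C, ProperEdgeColoring L p1 p2 c)
      (hdict : IsDictatorship C)
      (hq : q1 ≠ q2) (hqadj : G.Adj q1 q2) (hqout : G.EdgeOnOuter q1 q2)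
      (hverts : G.verts = {p1, p2, q1, q2})
      (hedges : ∀ u v, G.Adj u v → pathAdj p1 p2 u v ∨ pathAdj q1 q2 u v)
      (hz : (({p1, p2} : Set V) ∩ ({q1, q2} : Set V)) = {z})
      (hzdict : (z = p1 ∧ ∃ a, ∀ c ∈ C, c.1 = a) ∨ (z = p2 ∧ ∃ a, ∀ c ∈ C, c.2 = a)) :
      IsHarmonica L G p1 p2 q1 q2 C
  /-- Rule (iii): `C` is a dictatorship with dictator `z ∈ V(P)` in color `c`,
  sitting on a triangle `z u₁ u₂`. -/
  | dict (G : PlaneGraph V) (p1 p2 q1 q2 z w u1 u2 : V) (c : ℕ) (L0 : Finset ℕ)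
      (C C' : Set (ℕ × ℕ))
      (hcanvas : IsPathCanvas G p1 p2 L)
      (hproper : ∀ d ∈ C, ProperEdgeColoring L p1 p2 d)
      (hdict : IsDictatorship C)
      (hq : q1 ≠ q2) (hqadj : G.Adj q1 q2) (hqout : G.EdgeOnOuter q1 q2)
      (hz : (z = p1 ∧ w = p2 ∧ (∀ d ∈ C, d.1 = c) ∧
              (u1 = w → sndColors C = (L0 : Set ℕ)) ∧
              (u2 = w → sndColors C = (L0 : Set ℕ))) ∨
            (z = p2 ∧ w = p1 ∧ (∀ d ∈ C, d.2 = c) ∧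
              (u1 = w → fstColors C = (L0 : Set ℕ)) ∧
              (u2 = w → fstColors C = (L0 : Set ℕ))))
      (hzu1 : G.Adj z u1) (hzu2 : G.Adj z u2) (hu12 : G.Adj u1 u2)
      (hL0 : L0.card = 2)
      (hLu1 : u1 ∉ ({p1, p2} : Set V) → L u1 = L0 ∪ {c})
      (hLu2 : u2 ∉ ({p1, p2} : Set V) → L u2 = L0 ∪ {c})
      (hu1P : u1 ∈ ({p1, p2} : Set V) → u1 = w)
      (hu2P : u2 ∈ ({p1, p2} : Set V) → u2 = w)
      (hdem : IsDemocracy C')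
      (hC'1 : fstColors C' = (L0 : Set ℕ)) (hC'2 : sndColors C' = (L0 : Set ℕ))
      (hrec : IsHarmonica L (G.deleteVerts (({p1, p2} : Set V) \ {u1, u2})) u1 u2 q1 q2 C') :
      IsHarmonica L G p1 p2 q1 q2 C
  /-- Rule (iv), with `i = 1`: `C` is a democracy, `z` is a common neighbor of
  `p₁, p₂`, and `p₁` is deleted. -/
  | demo1 (G : PlaneGraph V) (p1 p2 q1 q2 z : V) (a b c : ℕ) (L0 : Finset ℕ)
      (C C' : Set (ℕ × ℕ))
      (hcanvas : IsPathCanvas G p1 p2 L)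
      (hproper : ∀ d ∈ C, ProperEdgeColoring L p1 p2 d)
      (hdemC : IsDemocracy C)
      (hq : q1 ≠ q2) (hqadj : G.Adj q1 q2) (hqout : G.EdgeOnOuter q1 q2)
      (hz1 : G.Adj z p1) (hz2 : G.Adj z p2)
      (hLz : L z = L0 ∪ {c})
      (hC1 : fstColors C = (L0 : Set ℕ)) (hC2 : sndColors C = (L0 : Set ℕ))
      (hab : a ≠ b) (hL0ab : (L0 : Set ℕ) = {a, b})
      (hC' : C' = {(c, a), (c, b)})
      (hrec : IsHarmonica L (G.deleteVerts {p1}) z p2 q1 q2 C') :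
      IsHarmonica L G p1 p2 q1 q2 C
  /-- Rule (iv), with `i = 2`: `C` is a democracy, `z` is a common neighbor of
  `p₁, p₂`, and `p₂` is deleted. -/
  | demo2 (G : PlaneGraph V) (p1 p2 q1 q2 z : V) (a b c : ℕ) (L0 : Finset ℕ)
      (C C' : Set (ℕ × ℕ))
      (hcanvas : IsPathCanvas G p1 p2 L)
      (hproper : ∀ d ∈ C, ProperEdgeColoring L p1 p2 d)
      (hdemC : IsDemocracy C)
      (hq : q1 ≠ q2) (hqadj : G.Adj q1 q2) (hqout : G.EdgeOnOuter q1 q2)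
      (hz1 : G.Adj z p1) (hz2 : G.Adj z p2)
      (hLz : L z = L0 ∪ {c})
      (hC1 : fstColors C = (L0 : Set ℕ)) (hC2 : sndColors C = (L0 : Set ℕ))
      (hab : a ≠ b) (hL0ab : (L0 : Set ℕ) = {a, b})
      (hC' : C' = {(c, a), (c, b)})
      (hrec : IsHarmonica L (G.deleteVerts {p2}) z p1 q1 q2 C') :
      IsHarmonica L G p1 p2 q1 q2 C

/-- `(G, L)` is a coloring harmonica from `uv` to `w` (source `Sum.inr (u, v)`)
or from `u` to `w` (source `Sum.inl u`). -/
inductive IsColoringHarmonica {V : Type u} [DecidableEq V] :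
    PlaneGraph V → (V → Finset ℕ) → V ⊕ V × V → V → Prop where
  /-- `G` is a triangle with vertex set `{u, v, w}`, `L(u) = L(v) = L(w)` and
  `|L(u)| = 2`. -/
  | tri (G : PlaneGraph V) (L : V → Finset ℕ) (u v w : V)
      (hconn : G.Connected) (huv : u ≠ v) (huw : u ≠ w) (hvw : v ≠ w)
      (hu : G.OnOuter u) (hv : G.OnOuter v) (hw : G.OnOuter w)
      (huvout : G.EdgeOnOuter u v)
      (hverts : G.verts = {u, v, w})
      (hadjuv : G.Adj u v) (hadjvw : G.Adj v w) (hadjuw : G.Adj u w)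
      (hLuv : L u = L v) (hLvw : L v = L w) (hcard : (L u).card = 2) :
      IsColoringHarmonica G L (Sum.inr (u, v)) w
  /-- There is a triangle `uvz` on the outer face; delete one or both of
  `u, v` and recurse from `z`. -/
  | step (G : PlaneGraph V) (L : V → Finset ℕ) (u v w z : V) (s : Set V)
      (hconn : G.Connected) (huv : u ≠ v) (huw : u ≠ w) (hvw : v ≠ w)
      (hu : G.OnOuter u) (hv : G.OnOuter v) (hw : G.OnOuter w)
      (huvout : G.EdgeOnOuter u v)
      (hadjuv : G.Adj u v) (hadjuz : G.Adj u z) (hadjvz : G.Adj v z)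
      (hz : G.OnOuter z)
      (hLuv : L u = L v) (hsub : L u ⊆ L z)
      (hcardu : (L u).card = 2) (hcardz : (L z).card = 3)
      (hs : s = {u} ∨ s = {v} ∨ s = ({u, v} : Set V))
      (hrec : IsColoringHarmonica (G.deleteVerts s)
        (Function.update L z (L z \ L u)) (Sum.inl z) w) :
      IsColoringHarmonica G L (Sum.inr (u, v)) w
  /-- `|L(u)| = 1`, `u` sits on a triangle `uxy`; delete `u` and recurse
  from `xy`. -/
  | vert (G : PlaneGraph V) (L : V → Finset ℕ) (u w x y : V)
      (hconn : G.Connected) (huw : u ≠ w)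
      (hu : G.OnOuter u) (hw : G.OnOuter w)
      (hx : G.OnOuter x) (hy : G.OnOuter y)
      (hadjux : G.Adj u x) (hadjuy : G.Adj u y) (hadjxy : G.Adj x y)
      (hcardu : (L u).card = 1)
      (hLxy : L x \ L u = L y \ L u) (hcardx : (L x \ L u).card = 2)
      (hrec : IsColoringHarmonica (G.deleteVerts {u})
        (Function.update (Function.update L x (L x \ L u)) y (L y \ L u))
        (Sum.inr (x, y)) w) :
      IsColoringHarmonica G L (Sum.inl u) w

/-- `(G, L)` contains a coloring harmonica `(H, L')` with the given source and
target: `H` is a subgraph of `G` and `L'` agrees with `L` on `V(H)`. -/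
def ContainsColoringHarmonica {V : Type u} [DecidableEq V] (G : PlaneGraph V)
    (L : V → Finset ℕ) (st : V ⊕ V × V) (w : V) : Prop :=
  ∃ (H : PlaneGraph V) (L' : V → Finset ℕ), H.IsSubgraph G ∧
    (∀ x ∈ H.verts, L' x = L x) ∧ IsColoringHarmonica H L' st w

/-- `v` is a cutvertex of the boundary of the outer face of `G`. -/
def BoundaryCutvertex {V : Type u} (G : PlaneGraph V) (v : V) : Prop :=
  ∃ a b : V, a ∈ G.boundaryVerts ∧ b ∈ G.boundaryVerts ∧ a ≠ v ∧ b ≠ v ∧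
    Relation.ReflTransGen (fun x y => G.Adj x y ∧ G.EdgeOnOuter x y) a b ∧
    ¬Relation.ReflTransGen
      (fun x y => G.Adj x y ∧ G.EdgeOnOuter x y ∧ x ≠ v ∧ y ≠ v) a b

open Classical in
/-- The list assignment of the democratic reduction `T(P, L0, x)`:
remove the colors of `L0` from the list of `x` and from the lists of all
neighbors of `P` other than `y`. -/
noncomputable def reducedL {V : Type u} (G : PlaneGraph V) (L : V → Finset ℕ)
    (L0 : Finset ℕ) (Q : List V) (x y : V) : V → Finset ℕ := fun w =>
  if w = x ∨ (w ≠ y ∧ ∃ p ∈ Q, G.Adj w p) then L w \ L0 else L w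

/-- The vertex set of the precolored subgraph of the democratic reduction:
`S ∖ V(P)`, together with `x` as an isolated vertex if its new list is
smaller than 3. -/
def reducedSverts {V : Type u} (Sverts : Set V) (Q : List V) (x : V)
    (L' : V → Finset ℕ) : Set V :=
  {v | (v ∈ Sverts ∧ v ∉ Q) ∨ (v = x ∧ (L' x).card < 3)}

/-- The adjacency of the precolored subgraph of the democratic reduction:
`S ∖ V(P)`. -/
def reducedSAdj {V : Type u} (SAdj : V → V → Prop) (Q : List V) : V → V → Prop :=
  fun u v => SAdj u v ∧ u ∉ Q ∧ v ∉ Q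

/-!
This is Thomassen's induction. Only the following consequence of planarity enters it: if a new
vertex is placed in the outer face and joined to all outer vertices, the resulting graph has neither
`K₅` nor `K₃,₃` as a minor. During the induction the vertices already removed are contracted to the
new vertex, together forming a connected set `A`, so that the outer vertices of what remains are
simply those adjacent to `A`. If two adjacent outer vertices separate the graph, the two sides are
colored one after the other. Otherwise no outer vertex has three outer neighbors, for these would
give a `K₅` or `K₃,₃` minor; hence one may remove an outer neighbor of a precolored vertex,
reserving two of its colors, as in Thomassen's proof.

That `K₅` and `K₃,₃` cannot be drawn is seen by counting windings. Let `θ` be the change of the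
argument of `q - p` along a pair of paths traced by `p` and `q`. Summed over pairs of disjoint
edges, these changes would satisfy a linear relation which a parity count excludes.
-/

/-! ### Continuous logarithms -/

section ContinuousLog

variable {X : Type*} [TopologicalSpace X] {f g l m : X → ℂ}

/-- `l` is a continuous branch of the logarithm of `f`. Increments `l y - l x` of such branches
serve as winding numbers along (possibly open) paths. -/
def IsContinuousLog (l f : X → ℂ) : Prop :=
  Continuous l ∧ ∀ x, Complex.exp (l x) = f x

theorem exists_isContinuousLog [SimplyConnectedSpace X] [LocallyPathConnectedSpace X]
    (hf : Continuous f) (hf₀ : ∀ x, f x ≠ 0) : ∃ l, IsContinuousLog l f := by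
  obtain ⟨x₀⟩ : Nonempty X := inferInstance
  obtain ⟨l, ⟨-, hl⟩, -⟩ := Complex.isCoveringMapOn_exp.existsUnique_continuousMap_lifts
    ⟨f, hf⟩ (a₀ := x₀) (Complex.exp_log (hf₀ x₀)) hf₀
  exact ⟨l, l.continuous, congrFun hl⟩

theorem IsContinuousLog.sub_eq_sub [PreconnectedSpace X] {c : ℂ} (hl : IsContinuousLog l f)
    (hm : IsContinuousLog m g) (hfg : ∀ x, f x = c * g x) (x y : X) :
    l x - l y = m x - m y := by
  have hexp (z : X) : Complex.exp (l z - m z) = c := by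
    rw [Complex.exp_sub, hl.2, hm.2, hfg, mul_div_cancel_right₀]
    exact hm.2 z ▸ Complex.exp_ne_zero _
  have hint (z : X) : ∃ n : ℤ, l z - m z = l y - m y + n * (2 * Real.pi * Complex.I) :=
    Complex.exp_eq_exp_iff_exists_int.1 (by rw [hexp, hexp])
  choose n hn using hint
  have hn_eq (z : X) : (n z : ℝ) = ((l z - m z - (l y - m y)) / (2 * Real.pi * Complex.I)).re := by
    rw [hn, add_sub_cancel_left, mul_div_cancel_right₀ _ Complex.two_pi_I_ne_zero,
      Complex.intCast_re]
  have hn_cont : Continuous n := by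
    refine Int.isClosedEmbedding_coe_real.isInducing.continuous_iff.2 ?_
    simp only [Function.comp_def, hn_eq]
    have := hl.1
    have := hm.1
    fun_prop
  have hxy : n x = n y := PreconnectedSpace.constant ‹_› hn_cont
  linear_combination hn x - hn y + congrArg (fun k : ℤ => (k : ℂ) * (2 * Real.pi * Complex.I)) hxy

/-- The logarithm of `γ s - δ t` exists on the whole square, so its increment around the boundary
vanishes. -/
theorem IsContinuousLog.sub_add_sub_eq_of_disjoint {γ δ a₀ a₁ b₀ b₁ : ℝ → ℂ}
    (hγ : Continuous γ) (hδ : Continuous δ) (hγδ : ∀ s t, γ s ≠ δ t)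
    (ha₀ : IsContinuousLog a₀ fun s => γ s - δ 0) (ha₁ : IsContinuousLog a₁ fun s => γ s - δ 1)
    (hb₀ : IsContinuousLog b₀ fun t => δ t - γ 0) (hb₁ : IsContinuousLog b₁ fun t => δ t - γ 1) :
    (a₀ 1 - a₀ 0) + (b₁ 1 - b₁ 0) = (b₀ 1 - b₀ 0) + (a₁ 1 - a₁ 0) := by
  obtain ⟨l, hl⟩ : ∃ l, IsContinuousLog l fun x : ℝ × ℝ => γ x.1 - δ x.2 :=
    exists_isContinuousLog (by fun_prop) fun x => sub_ne_zero.2 (hγδ _ _)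
  have horizontal (t : ℝ) : IsContinuousLog (fun s => l (s, t)) fun s => γ s - δ t :=
    ⟨by have := hl.1; fun_prop, fun s => hl.2 (s, t)⟩
  have vertical (s : ℝ) : IsContinuousLog (fun t => l (s, t)) fun t => γ s - δ t :=
    ⟨by have := hl.1; fun_prop, fun t => hl.2 (s, t)⟩
  have bottom := ha₀.sub_eq_sub (c := 1) (horizontal 0) (fun s => by ring) 1 0
  have top := ha₁.sub_eq_sub (c := 1) (horizontal 1) (fun s => by ring) 1 0
  have left := hb₀.sub_eq_sub (c := -1) (vertical 0) (fun t => by ring) 1 0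
  have right := hb₁.sub_eq_sub (c := -1) (vertical 1) (fun t => by ring) 1 0
  linear_combination bottom - top - left + right

end ContinuousLog

/-! ### Weak drawings in the plane -/

/-- A weak drawing of a graph: vertices are distinct points, an edge is any set in which its ends
can be joined by a path, edges avoid the other vertices, and two edges without a common end are
disjoint. Edges with a common end may meet anywhere, which makes the notion stable under
contracting connected sets of vertices. -/
structure WeakDrawing {W : Type*} (G : SimpleGraph W) (X : Type*) [TopologicalSpace X] where
  pos : W → X
  edge : W → W → Set X
  pos_injective : Function.Injective pos
  joinedIn ⦃u v⦄ : G.Adj u v → JoinedIn (edge u v) (pos u) (pos v)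
  pos_notMem_edge ⦃u v w⦄ : G.Adj u v → w ≠ u → w ≠ v → pos w ∉ edge u v
  disjoint_edge ⦃u v x y⦄ : G.Adj u v → G.Adj x y → u ≠ x → u ≠ y → v ≠ x → v ≠ y →
    Disjoint (edge u v) (edge x y)

/-- The image of a weak drawing under a continuous injection. -/
def WeakDrawing.map {W X Y : Type*} [TopologicalSpace X] [TopologicalSpace Y] {G : SimpleGraph W}
    (D : WeakDrawing G X) (f : X → Y) (hf : Continuous f) (hf_inj : Function.Injective f) :
    WeakDrawing G Y where
  pos := f ∘ D.pos
  edge u v := f '' D.edge u v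
  pos_injective := hf_inj.comp D.pos_injective
  joinedIn _ _ h := by
    obtain ⟨γ, hγ⟩ := D.joinedIn h
    exact ⟨γ.map hf, fun t => mem_image_of_mem f (hγ t)⟩
  pos_notMem_edge _ _ _ h hu hv := by
    rw [Function.comp_apply, hf_inj.mem_set_image]
    exact D.pos_notMem_edge h hu hv
  disjoint_edge _ _ _ _ huv hxy hux huy hvx hvy :=
    (disjoint_image_iff hf_inj).2 (D.disjoint_edge huv hxy hux huy hvx hvy)

section Parity

theorem exists_isContinuousLog_sub_eq {γ : ℝ → ℂ} (hγ : Continuous γ) {z u v : ℂ}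
    (hz : ∀ t, γ t ≠ z) (hu : Complex.exp u = γ 0 - z) (hv : Complex.exp v = γ 1 - z) :
    ∃ (n : ℤ) (a : ℝ → ℂ), IsContinuousLog a (fun t => γ t - z) ∧
      a 1 - a 0 = v - u + n * (2 * Real.pi * Complex.I) := by
  obtain ⟨a, ha⟩ : ∃ a, IsContinuousLog a fun t => γ t - z :=
    exists_isContinuousLog (by fun_prop) fun t => sub_ne_zero.2 (hz t)
  have hexp : Complex.exp (a 1 - a 0) = Complex.exp (v - u) := by
    rw [Complex.exp_sub, Complex.exp_sub, ha.2, ha.2, hu, hv]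
  obtain ⟨n, hn⟩ := Complex.exp_eq_exp_iff_exists_int.1 hexp
  exact ⟨n, a, ha, hn⟩

variable {ι : Type*} [LinearOrder ι]

/-- Logarithms of the differences of distinct points can be chosen so that those of `q i - q j` and
`q j - q i` differ by `±πi`, with the sign read off from the order. -/
theorem exists_log_sub_of_injective {q : ι → ℂ} (hq : Function.Injective q) :
    ∃ μ : ι → ι → ℂ, (∀ i j, i ≠ j → Complex.exp (μ i j) = q i - q j) ∧
      ∀ i j, i ≠ j →
        μ i j - μ j i = (2 * (if j < i then 1 else 0) - 1) * (Real.pi * Complex.I) := by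
  refine ⟨fun i j => if j < i then Complex.log (q j - q i) + Real.pi * Complex.I
    else Complex.log (q i - q j), fun i j hij => ?_, fun i j hij => ?_⟩
  · have hij₀ : q i - q j ≠ 0 := sub_ne_zero.2 (hq.ne hij)
    have hji₀ : q j - q i ≠ 0 := sub_ne_zero.2 (hq.ne hij.symm)
    dsimp only
    split_ifs
    · rw [Complex.exp_add, Complex.exp_log hji₀, Complex.exp_pi_mul_I]
      ring
    · rw [Complex.exp_log hij₀]
  · rcases hij.lt_or_gt with h | h <;> simp only [if_pos h, if_neg h.not_gt] <;> ring

namespace WeakDrawing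

theorem exists_edge_path {W : Type*} {G : SimpleGraph W} (D : WeakDrawing G ℂ) {i j : W}
    (h : G.Adj i j) : ∃ γ : ℝ → ℂ, Continuous γ ∧ γ 0 = D.pos i ∧ γ 1 = D.pos j ∧
      ∀ t, γ t ∈ D.edge i j := by
  obtain ⟨γ, hγ⟩ := D.joinedIn h
  exact ⟨γ.extend, γ.continuous_extend, γ.extend_zero, γ.extend_one, fun t => hγ _⟩

variable {G : SimpleGraph ι}

/-- Here `N i j k` counts the turns of the edge from `i` to `j` around the point `k`. -/
theorem exists_winding_relation (D : WeakDrawing G ℂ) :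
    ∃ N : ι → ι → ι → ℤ, ∀ ⦃i j k l⦄, G.Adj i j → G.Adj k l → i ≠ k → i ≠ l → j ≠ k → j ≠ l →
      ((if k < j then 1 else 0) - (if k < i then 1 else 0) - (if l < j then 1 else 0) +
        (if l < i then 1 else 0) : ℤ) = N k l i - N k l j - N i j k + N i j l := by
  choose γ hγ hγ₀ hγ₁ hγ_mem using fun i j (h : G.Adj i j) => D.exists_edge_path h
  obtain ⟨μ, hμ, hμ_sub⟩ := exists_log_sub_of_injective D.pos_injective
  have hN (i j k : ι) : ∃ n : ℤ, ∀ h : G.Adj i j, k ≠ i → k ≠ j → ∃ a : ℝ → ℂ,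
      IsContinuousLog a (fun t => γ i j h t - D.pos k) ∧
        a 1 - a 0 = μ j k - μ i k + n * (2 * Real.pi * Complex.I) := by
    by_cases hk : G.Adj i j ∧ k ≠ i ∧ k ≠ j
    · obtain ⟨h, hki, hkj⟩ := hk
      obtain ⟨n, hn⟩ := exists_isContinuousLog_sub_eq (hγ i j h) (z := D.pos k)
        (fun t ht => D.pos_notMem_edge h hki hkj (ht ▸ hγ_mem i j h t))
        (by rw [hγ₀, hμ i k hki.symm]) (by rw [hγ₁, hμ j k hkj.symm])
      exact ⟨n, fun _ _ _ => hn⟩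
    · exact ⟨0, fun h hki hkj => (hk ⟨h, hki, hkj⟩).elim⟩
  choose N hN using hN
  refine ⟨N, fun i j k l hij hkl hik hil hjk hjl => ?_⟩
  obtain ⟨a₀, ha₀, ha₀_eq⟩ := hN i j k hij hik.symm hjk.symm
  obtain ⟨a₁, ha₁, ha₁_eq⟩ := hN i j l hij hil.symm hjl.symm
  obtain ⟨b₀, hb₀, hb₀_eq⟩ := hN k l i hkl hik hil
  obtain ⟨b₁, hb₁, hb₁_eq⟩ := hN k l j hkl hjk hjl
  rw [← hγ₀ i j hij] at hb₀
  rw [← hγ₁ i j hij] at hb₁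
  rw [← hγ₀ k l hkl] at ha₀
  rw [← hγ₁ k l hkl] at ha₁
  have square := IsContinuousLog.sub_add_sub_eq_of_disjoint (hγ i j hij) (hγ k l hkl)
    (fun s t => (D.disjoint_edge hij hkl hik hil hjk hjl).ne_of_mem (hγ_mem _ _ _ s)
      (hγ_mem _ _ _ t)) ha₀ ha₁ hb₀ hb₁
  have hpi : (2 * Real.pi * Complex.I : ℂ) ≠ 0 := Complex.two_pi_I_ne_zero
  rw [← Int.cast_inj (α := ℂ)]
  push_cast
  refine mul_right_cancel₀ hpi ?_
  linear_combination square - ha₀_eq - hb₁_eq + hb₀_eq + ha₁_eq - hμ_sub j k hjk + hμ_sub i k hik +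
    hμ_sub j l hjl - hμ_sub i l hil

theorem exists_alternating_relation (D : WeakDrawing G ℂ) :
    ∃ N : ι → ι → ι → ZMod 2, ∀ ⦃i j k l⦄, G.Adj i j → G.Adj k l → k < l → i < k → j ≠ k → j ≠ l →
      (if k < j ∧ j < l then 1 else 0) = N i j k + N i j l + (N k l i + N k l j) := by
  obtain ⟨N, hN⟩ := D.exists_winding_relation
  refine ⟨fun i j k => N i j k, fun i j k l hij hkl hkl_lt hik hjk hjl => ?_⟩
  have hil := hik.trans hkl_lt
  have hrel := congrArg (Int.cast : ℤ → ZMod 2) (hN hij hkl hik.ne hil.ne hjk hjl)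
  simp only [if_neg hik.not_gt, if_neg hil.not_gt] at hrel
  push_cast at hrel
  simp only [CharTwo.sub_eq_add, add_zero] at hrel
  calc (if k < j ∧ j < l then 1 else 0 : ZMod 2)
      = (if k < j then 1 else 0) + (if l < j then 1 else 0) := by
        rcases hjl.lt_or_gt with hjl' | hjl'
        · simp [hjl', hjl'.not_gt]
        · simp [hjl', hjl'.not_gt, hkl_lt.trans hjl', CharTwo.add_self_eq_zero]
    _ = N i j k + N i j l + (N k l i + N k l j) := by rw [hrel]; ring

end WeakDrawing

theorem sum_sum_ite_lt_add_swap {α κ M : Type*} [Fintype α] [LinearOrder κ] [AddCommMonoid M]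
    (ρ : α → κ) (F : α → α → M) (hF : ∀ a b, ρ a = ρ b → F a b = 0) :
    ∑ a, ∑ b, (if ρ a < ρ b then F a b + F b a else 0) = ∑ a, ∑ b, F a b := by
  have hsplit (a b : α) : (if ρ a < ρ b then F a b + F b a else 0) =
      (if ρ a < ρ b then F a b else 0) + if ρ a < ρ b then F b a else 0 := by
    split_ifs <;> simp
  have hmerge (a b : α) : (if ρ a < ρ b then F a b else 0) + (if ρ b < ρ a then F a b else 0) =
      F a b := by
    rcases lt_trichotomy (ρ a) (ρ b) with h | h | h
    · simp [h, h.not_gt]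
    · simp [h, hF a b h]
    · simp [h, h.not_gt]
  simp only [hsplit, Finset.sum_add_distrib]
  rw [Finset.sum_comm (f := fun a b => if ρ a < ρ b then F b a else 0)]
  simp only [← Finset.sum_add_distrib, hmerge]

variable [Fintype ι] (G : SimpleGraph ι) [DecidableRel G.Adj]

/-- The pairs of edges whose ends alternate in the order of the vertices. They are the pairs that
cross when the vertices are placed on a line and the edges are drawn as arcs on one side of it. -/
def alternatingPairs : Finset ((ι × ι) × (ι × ι)) :=
  {p | G.Adj p.1.1 p.1.2 ∧ G.Adj p.2.1 p.2.2 ∧ p.1.1 < p.2.1 ∧ p.2.1 < p.1.2 ∧ p.1.2 < p.2.2}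

variable {G}

theorem sum_edges_add_eq_zero_of_even_degree (P : ι → Prop) [DecidablePred P] (f : ι → ZMod 2)
    (heven : ∀ k, P k → Even (Finset.card {l | G.Adj k l ∧ P l})) :
    ∑ b : ι × ι, (if G.Adj b.1 b.2 ∧ b.1 < b.2 ∧ P b.1 ∧ P b.2 then f b.1 + f b.2 else 0) = 0 := by
  let F (k l : ι) : ZMod 2 := if G.Adj k l ∧ P k ∧ P l then f k else 0
  have hrow (k : ι) : ∑ l, F k l = 0 := by
    by_cases hk : P k
    · calc ∑ l, F k l = ∑ l, if G.Adj k l ∧ P l then f k else 0 := by simp [F, hk]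
        _ = (Finset.card {l | G.Adj k l ∧ P l} : ZMod 2) * f k := by
          rw [← Finset.sum_filter, Finset.sum_const, nsmul_eq_mul]
        _ = 0 := by rw [ZMod.natCast_eq_zero_iff_even.2 (heven k hk), zero_mul]
    · simp [F, hk]
  calc _ = ∑ k, ∑ l, (if k < l then F k l + F l k else 0) := by
        rw [Fintype.sum_prod_type]
        refine Finset.sum_congr rfl fun k _ => Finset.sum_congr rfl fun l _ => ?_
        by_cases hkl : G.Adj k l <;> by_cases hk : P k <;> by_cases hl : P l <;>
          simp [F, G.adj_comm l k, hkl, hk, hl]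
    _ = ∑ k, ∑ l, F k l := sum_sum_ite_lt_add_swap id F fun k l (hkl : k = l) => by simp [F, hkl]
    _ = 0 := by simp only [hrow, Finset.sum_const_zero]

/-- Summing the winding relation over all pairs of disjoint edges, every winding `N i j k` occurs
once for each edge at `k` that is disjoint from `i j`, hence an even number of times. -/
theorem WeakDrawing.even_card_alternatingPairs (D : WeakDrawing G ℂ)
    (heven : ∀ i j k, G.Adj i j → k ≠ i → k ≠ j →
      Even (Finset.card {l | G.Adj k l ∧ l ≠ i ∧ l ≠ j})) :
    Even (alternatingPairs G).card := by
  obtain ⟨N, hN⟩ := D.exists_alternating_relation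
  let F (a b : ι × ι) : ZMod 2 :=
    if G.Adj a.1 a.2 ∧ a.1 < a.2 then
      if G.Adj b.1 b.2 ∧ b.1 < b.2 ∧ (b.1 ≠ a.1 ∧ b.1 ≠ a.2) ∧ (b.2 ≠ a.1 ∧ b.2 ≠ a.2) then
        N a.1 a.2 b.1 + N a.1 a.2 b.2 else 0
    else 0
  have hrow (a : ι × ι) : ∑ b, F a b = 0 := by
    by_cases ha : G.Adj a.1 a.2 ∧ a.1 < a.2
    · simp only [F, if_pos ha]
      exact sum_edges_add_eq_zero_of_even_degree (fun k => k ≠ a.1 ∧ k ≠ a.2) (N a.1 a.2)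
        fun k hk => heven _ _ k ha.1 hk.1 hk.2
    · simp only [F, if_neg ha, Finset.sum_const_zero]
  have hpair (a b : ι × ι) : (if (a, b) ∈ alternatingPairs G then 1 else 0) =
      if a.1 < b.1 then F a b + F b a else 0 := by
    simp only [F, alternatingPairs, Finset.mem_filter_univ]
    grind
  rw [← ZMod.natCast_eq_zero_iff_even]
  calc ((alternatingPairs G).card : ZMod 2)
      = ∑ p, if p ∈ alternatingPairs G then 1 else 0 := by simp
    _ = ∑ a, ∑ b, (if a.1 < b.1 then F a b + F b a else 0) := by
      rw [Fintype.sum_prod_type]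
      simp only [hpair]
    _ = ∑ a, ∑ b, F a b := sum_sum_ite_lt_add_swap Prod.fst F fun a b hab => by simp [F, hab]
    _ = 0 := by simp only [hrow, Finset.sum_const_zero]

end Parity

theorem WeakDrawing.isEmpty_top_fin_five : IsEmpty (WeakDrawing (⊤ : SimpleGraph (Fin 5)) ℂ) :=
  ⟨fun D => absurd (D.even_card_alternatingPairs (by decide +kernel)) (by decide +kernel)⟩

instance decidableRelCompleteBipartiteGraphAdj (α β : Type*) :
    DecidableRel (completeBipartiteGraph α β).Adj := fun _ _ =>
  inferInstanceAs (Decidable (_ ∨ _))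

/-- The left vertices in front of the right ones. -/
abbrev sumFinThreeLinearOrder : LinearOrder (Fin 3 ⊕ Fin 3) :=
  LinearOrder.lift' finSumFinEquiv finSumFinEquiv.injective

attribute [local instance] sumFinThreeLinearOrder in
theorem WeakDrawing.isEmpty_completeBipartiteGraph_fin_three :
    IsEmpty (WeakDrawing (completeBipartiteGraph (Fin 3) (Fin 3)) ℂ) :=
  ⟨fun D => absurd (D.even_card_alternatingPairs (by decide +kernel)) (by decide +kernel)⟩

/-! ### Minors of graphs with a planar weak drawing -/

/-- The set of all vertices with a neighbor in `A`, possibly lying in `A` themselves. -/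
def neighborhood {W : Type*} (G : SimpleGraph W) (A : Set W) : Set W :=
  {v | ∃ a ∈ A, G.Adj a v}

/-- `H` is a minor of `G`, expressed through branch sets: disjoint connected sets `B i` of vertices
of `G` such that `B i` and `B j` are joined by an edge whenever `i` and `j` are adjacent in `H`. -/
def IsMinor {ι W : Type*} (H : SimpleGraph ι) (G : SimpleGraph W) : Prop :=
  ∃ B : ι → Set W, (∀ i, (G.induce (B i)).Connected) ∧ Pairwise (Function.onFun Disjoint B) ∧
    ∀ i j, H.Adj i j → (neighborhood G (B i) ∩ B j).Nonempty

namespace WeakDrawing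

variable {W X : Type*} [TopologicalSpace X] {G : SimpleGraph W} {B C : Set W}

/-- The part of the plane covered by the subgraph induced on `B`. -/
def span (D : WeakDrawing G X) (B : Set W) : Set X :=
  {x | (∃ v ∈ B, D.pos v = x) ∨ ∃ u ∈ B, ∃ v ∈ B, G.Adj u v ∧ x ∈ D.edge u v}

theorem joinedIn_span (D : WeakDrawing G X) (hB : (G.induce B).Preconnected) {u v : W}
    (hu : u ∈ B) (hv : v ∈ B) : JoinedIn (D.span B) (D.pos u) (D.pos v) := by
  suffices ∀ {a b : B}, (G.induce B).Walk a b → JoinedIn (D.span B) (D.pos a) (D.pos b) from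
    this (hB ⟨u, hu⟩ ⟨v, hv⟩).some
  intro a b p
  induction p with
  | @nil a => exact JoinedIn.refl (Or.inl ⟨a, a.2, rfl⟩)
  | @cons a b _ hab _ ih =>
    exact ((D.joinedIn hab).mono fun x hx => Or.inr ⟨a, a.2, b, b.2, hab, hx⟩).trans ih

theorem pos_notMem_span (D : WeakDrawing G X) {w : W} (hw : w ∉ B) : D.pos w ∉ D.span B := by
  rintro (⟨v, hv, hvw⟩ | ⟨u, hu, v, hv, huv, hmem⟩)
  · exact hw (D.pos_injective hvw ▸ hv)
  · exact D.pos_notMem_edge huv (ne_of_mem_of_not_mem hu hw).symm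
      (ne_of_mem_of_not_mem hv hw).symm hmem

theorem disjoint_span (D : WeakDrawing G X) (hBC : Disjoint B C) :
    Disjoint (D.span B) (D.span C) := by
  refine Set.disjoint_left.2 ?_
  rintro x (⟨w, hw, rfl⟩ | ⟨u, hu, v, hv, huv, hx⟩) hxC
  · exact D.pos_notMem_span (hBC.notMem_of_mem_left hw) hxC
  · rcases hxC with ⟨w, hw, rfl⟩ | ⟨y, hy, z, hz, hyz, hx'⟩
    · exact D.pos_notMem_span (hBC.notMem_of_mem_right hw) (Or.inr ⟨u, hu, v, hv, huv, hx⟩)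
    · exact Set.disjoint_left.1 (D.disjoint_edge huv hyz (hBC.ne_of_mem hu hy)
        (hBC.ne_of_mem hu hz) (hBC.ne_of_mem hv hy) (hBC.ne_of_mem hv hz)) hx hx'

end WeakDrawing

theorem connected_induce_union_of_touching {W : Type*} {G : SimpleGraph W} {B C : Set W}
    (hB : (G.induce B).Preconnected) (hC : (G.induce C).Preconnected)
    (hBC : (neighborhood G B ∩ C).Nonempty) : (G.induce (B ∪ C)).Connected := by
  obtain ⟨c, ⟨b, hb, hbc⟩, hc⟩ := hBC
  exact SimpleGraph.connected_induce_union hB hC hb hc hbc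

theorem IsMinor.nonempty_weakDrawing {ι W X : Type*} [TopologicalSpace X] {H : SimpleGraph ι}
    {G : SimpleGraph W} (hHG : IsMinor H G) (D : WeakDrawing G X) : Nonempty (WeakDrawing H X) := by
  obtain ⟨B, hconn, hdisj, htouch⟩ := hHG
  choose rep hrep using fun i => nonempty_subtype.1 (hconn i).nonempty
  have hunion {i j k : ι} (hik : i ≠ k) (hjk : j ≠ k) : Disjoint (B i ∪ B j) (B k) :=
    (hdisj hik).union_left (hdisj hjk)
  exact ⟨{
    pos := fun i => D.pos (rep i)
    edge := fun i j => D.span (B i ∪ B j)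
    pos_injective := fun i j hij => not_not.1 fun hne =>
      (hdisj hne).ne_of_mem (hrep i) (hrep j) (D.pos_injective hij)
    joinedIn := fun i j hij => D.joinedIn_span
      (connected_induce_union_of_touching (hconn i).preconnected (hconn j).preconnected
        (htouch i j hij)).preconnected (Or.inl (hrep i)) (Or.inr (hrep j))
    pos_notMem_edge := fun i j k _ hki hkj =>
      D.pos_notMem_span ((hunion hki.symm hkj.symm).notMem_of_mem_right (hrep k))
    disjoint_edge := fun i j k l _ _ hik hil hjk hjl =>
      D.disjoint_span ((hunion hik hjk).union_right (hunion hil hjl)) }⟩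

/-- `G` has neither `K₅` nor `K₃,₃` as a minor. By Wagner's theorem this is planarity; only the easy
direction is needed. -/
structure HasNoKuratowskiMinor {W : Type*} (G : SimpleGraph W) : Prop where
  not_isMinor_top : ¬ IsMinor (⊤ : SimpleGraph (Fin 5)) G
  not_isMinor_completeBipartite : ¬ IsMinor (completeBipartiteGraph (Fin 3) (Fin 3)) G

theorem WeakDrawing.hasNoKuratowskiMinor {W : Type*} {G : SimpleGraph W} (D : WeakDrawing G ℂ) :
    HasNoKuratowskiMinor G where
  not_isMinor_top h := isEmpty_top_fin_five.false (h.nonempty_weakDrawing D).some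
  not_isMinor_completeBipartite h :=
    isEmpty_completeBipartiteGraph_fin_three.false (h.nonempty_weakDrawing D).some

section Links

variable {W : Type*} {G : SimpleGraph W} {A B C Z R S : Set W} {a b x : W}

theorem neighborhood_mono (h : A ⊆ B) : neighborhood G A ⊆ neighborhood G B :=
  fun _ ⟨a, ha, hav⟩ => ⟨a, h ha, hav⟩

@[simp]
theorem mem_neighborhood_singleton : b ∈ neighborhood G {a} ↔ G.Adj a b := by
  simp [neighborhood]

theorem neighborhood_inter_nonempty_comm :
    (neighborhood G B ∩ C).Nonempty ↔ (neighborhood G C ∩ B).Nonempty :=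
  ⟨fun ⟨c, ⟨b, hb, hbc⟩, hc⟩ => ⟨b, ⟨c, hc, hbc.symm⟩, hb⟩,
    fun ⟨b, ⟨c, hc, hcb⟩, hb⟩ => ⟨c, ⟨b, hb, hcb.symm⟩, hc⟩⟩

theorem connected_induce_singleton : (G.induce {a}).Connected :=
  SimpleGraph.Connected.mk SimpleGraph.Preconnected.of_subsingleton

theorem connected_induce_insert_of_mem_neighborhood (hZ : (G.induce Z).Preconnected)
    (h : a ∈ neighborhood G Z) : (G.induce (insert a Z)).Connected := by
  rw [← Set.union_singleton]
  exact connected_induce_union_of_touching hZ connected_induce_singleton.preconnected ⟨a, h, rfl⟩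

theorem fin_three_eq_or (i j : Fin 3) : j = i ∨ j = i + 1 ∨ j = i + 1 + 1 := by
  decide +revert

theorem pairwise_fin_three {r : Fin 3 → Fin 3 → Prop} (hsymm : ∀ i j, r i j → r j i)
    (h : ∀ i, r i (i + 1)) : Pairwise r := by
  intro i j hij
  have : j = i + 1 ∨ i = j + 1 := by decide +revert
  rcases this with rfl | rfl
  · exact h i
  · exact hsymm _ _ (h j)

namespace HasNoKuratowskiMinor

theorem false_of_three_common_neighbors (hG : HasNoKuratowskiMinor G) {B : Fin 3 → Set W}
    {y : Fin 3 → W} (hconn : ∀ i, (G.induce (B i)).Connected)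
    (hdisj : Pairwise (Function.onFun Disjoint B)) (hy : Function.Injective y)
    (hyB : ∀ i j, y j ∉ B i) (htouch : ∀ i j, y j ∈ neighborhood G (B i)) : False := by
  refine hG.not_isMinor_completeBipartite ⟨Sum.elim B fun j => {y j}, ?_, ?_, ?_⟩
  · rintro (i | j)
    exacts [hconn i, connected_induce_singleton]
  · rintro (i | i) (j | j) hij
    · exact hdisj fun h => hij (congrArg Sum.inl h)
    · exact Set.disjoint_singleton_right.2 (hyB i j)
    · exact Set.disjoint_singleton_left.2 (hyB j i)
    · exact Set.disjoint_singleton.2 (hy.ne fun h => hij (congrArg Sum.inr h))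
  · rintro (i | i) (j | j) hij
    · simp at hij
    · exact ⟨y j, htouch i j, rfl⟩
    · exact neighborhood_inter_nonempty_comm.1 ⟨y i, htouch j i, rfl⟩
    · simp at hij

theorem false_of_pairwise_touching (hG : HasNoKuratowskiMinor G) {B : Fin 5 → Set W}
    (hconn : ∀ i, (G.induce (B i)).Connected)
    (hB : ∀ i j, i < j → Disjoint (B i) (B j) ∧ (neighborhood G (B i) ∩ B j).Nonempty) : False := by
  refine hG.not_isMinor_top ⟨B, hconn, fun i j hij => ?_, fun i j hij => ?_⟩
  · rcases hij.lt_or_gt with h | h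
    exacts [(hB i j h).1, (hB j i h).1.symm]
  · rcases hij.lt_or_gt with h | h
    exacts [(hB i j h).2, neighborhood_inter_nonempty_comm.1 (hB j i h).2]

end HasNoKuratowskiMinor

/-- `Z` is the interior of a connection between `a` and `b`: either it is empty and `a`, `b` are
adjacent, or it is connected and meets both neighborhoods. -/
def IsLink (G : SimpleGraph W) (a b : W) (Z : Set W) : Prop :=
  a ∉ Z ∧ b ∉ Z ∧ (Z = ∅ ∧ G.Adj a b ∨
    (G.induce Z).Connected ∧ a ∈ neighborhood G Z ∧ b ∈ neighborhood G Z)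

theorem IsLink.connected_induce_insert (h : IsLink G a b Z) :
    (G.induce (insert a Z)).Connected := by
  rcases h.2.2 with ⟨rfl, -⟩ | ⟨hZ, ha, -⟩
  · rw [insert_empty_eq]
    exact connected_induce_singleton
  · exact connected_induce_insert_of_mem_neighborhood hZ.preconnected ha

theorem IsLink.mem_neighborhood_insert (h : IsLink G a b Z) : b ∈ neighborhood G (insert a Z) := by
  rcases h.2.2 with ⟨-, hab⟩ | ⟨-, -, hb⟩
  · exact ⟨a, mem_insert a Z, hab⟩
  · exact neighborhood_mono (subset_insert a Z) hb

theorem eq_or_exists_connected_of_walk (p : G.Walk a b) (hp : ∀ v ∈ p.support, v ∈ S) :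
    a = b ∨ ∃ Z ⊆ S \ {b}, a ∈ Z ∧ (G.induce Z).Connected ∧ b ∈ neighborhood G Z := by
  induction p with
  | nil => exact Or.inl rfl
  | @cons u v w huv p ih =>
    simp only [SimpleGraph.Walk.support_cons, List.mem_cons, forall_eq_or_imp] at hp
    by_cases huw : u = w
    · exact Or.inl huw
    right
    rcases ih hp.2 with rfl | ⟨Z, hZS, hvZ, hZ, hwZ⟩
    · exact ⟨{u}, by simp [hp.1, huw], rfl, connected_induce_singleton, by simpa⟩
    · exact ⟨insert u Z, insert_subset ⟨hp.1, huw⟩ hZS, mem_insert u Z,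
        connected_induce_insert_of_mem_neighborhood hZ.preconnected ⟨v, hvZ, huv.symm⟩,
        neighborhood_mono (subset_insert u Z) hwZ⟩

theorem exists_isLink (hS : (G.induce S).Preconnected) (ha : a ∈ S) (hb : b ∈ S) (hab : a ≠ b) :
    ∃ Z ⊆ S, IsLink G a b Z := by
  obtain ⟨p, hp⟩ := (hS ⟨a, ha⟩ ⟨b, hb⟩).exists_isPath
  cases p with
  | nil => exact absurd rfl hab
  | @cons _ v _ hav q =>
    have hq : ∀ w ∈ (q.map (SimpleGraph.Embedding.induce S).toHom).support, w ∈ S \ {a} := by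
      rw [SimpleGraph.Walk.cons_isPath_iff] at hp
      simp only [SimpleGraph.Walk.support_map, List.mem_map]
      rintro _ ⟨w, hw, rfl⟩
      exact ⟨w.2, fun hwa => hp.2 (by rwa [show w = ⟨a, ha⟩ from Subtype.ext hwa] at hw)⟩
    rcases eq_or_exists_connected_of_walk _ hq with (rfl : (v : W) = b) | ⟨Z, hZ, hvZ, hconn, hbZ⟩
    · exact ⟨∅, empty_subset S, notMem_empty a, notMem_empty _, Or.inl ⟨rfl, hav⟩⟩
    · exact ⟨Z, fun w hw => (hZ hw).1.1, fun h => (hZ h).1.2 rfl, fun h => (hZ h).2 rfl,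
        Or.inr ⟨hconn, ⟨v, hvZ, hav.symm⟩, hbZ⟩⟩

theorem IsLink.connected_of_nonempty (h : IsLink G a b Z) (hZ : Z.Nonempty) :
    (G.induce Z).Connected ∧ a ∈ neighborhood G Z ∧ b ∈ neighborhood G Z :=
  h.2.2.resolve_left fun h => hZ.ne_empty h.1

/-- The configuration formed by a connected set `A`, a vertex `x` outside `A`, and three further
vertices `y i`, where `A` and `x` are adjacent to each other's and to all `y i`. -/
structure IsTripod (G : SimpleGraph W) (A : Set W) (x : W) (y : Fin 3 → W) : Prop where
  connected : (G.induce A).Connected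
  notMem : x ∉ A
  mem_neighborhood : x ∈ neighborhood G A
  injective : Function.Injective y
  apply_notMem (i) : y i ∉ A
  apply_mem_neighborhood (i) : y i ∈ neighborhood G A
  adj (i) : G.Adj x (y i)

namespace HasNoKuratowskiMinor

variable {y : Fin 3 → W}

/-- Together with `A` and `x`, the set `C` has the three common neighbors `y i`. -/
theorem false_of_tripod_of_connected (hG : HasNoKuratowskiMinor G) (hAx : IsTripod G A x y)
    (hC : (G.induce C).Connected) (hAC : Disjoint A C) (hxC : x ∉ C) (hyC : ∀ i, y i ∉ C)
    (hy : ∀ i, y i ∈ neighborhood G C) : False := by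
  refine hG.false_of_three_common_neighbors (B := ![A, {x}, C]) ?_ ?_ hAx.injective ?_ ?_
  · simp [Fin.forall_fin_succ, hAx.connected, hC]
  · refine pairwise_fin_three (fun _ _ h => h.symm) ?_
    simp [Fin.forall_fin_succ, Function.onFun, hAx.notMem, hAC.symm, hxC]
  · simp [Fin.forall_fin_succ, hAx.apply_notMem, hyC, (hAx.adj _).ne']
  · simp [Fin.forall_fin_succ, hAx.apply_mem_neighborhood, hy, hAx.adj]

/-- If the links are pairwise disjoint, the sets `A`, `{x}` and `{y i} ∪ Z i` touch pairwise. -/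
theorem false_of_tripod_of_disjoint_links (hG : HasNoKuratowskiMinor G) (hAx : IsTripod G A x y)
    {Z : Fin 3 → Set W} (hZ : ∀ i, IsLink G (y i) (y (i + 1)) (Z i))
    (hdisj : Pairwise (Function.onFun Disjoint Z)) (hyZ : ∀ i j, y j ∉ Z i)
    (hAZ : ∀ i, Disjoint A (Z i)) (hxZ : ∀ i, x ∉ Z i) : False := by
  let C (i : Fin 3) : Set W := insert (y i) (Z i)
  have hC {i j} (hij : i ≠ j) : Disjoint (C i) (C j) ∧ (neighborhood G (C i) ∩ C j).Nonempty := by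
    refine ⟨by simp [C, hyZ, hAx.injective.ne hij.symm, hdisj hij], ?_⟩
    exact pairwise_fin_three (r := fun i j => (neighborhood G (C i) ∩ C j).Nonempty)
      (fun _ _ => neighborhood_inter_nonempty_comm.1)
      (fun i => ⟨_, (hZ i).mem_neighborhood_insert, mem_insert _ _⟩) hij
  have hAC (i) : Disjoint A (C i) ∧ (neighborhood G A ∩ C i).Nonempty :=
    ⟨by simp [C, hAx.apply_notMem, hAZ], _, hAx.apply_mem_neighborhood i, mem_insert _ _⟩
  have hxC (i) : Disjoint {x} (C i) ∧ (neighborhood G {x} ∩ C i).Nonempty :=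
    ⟨by simp [C, hxZ, (hAx.adj i).ne],
      _, mem_neighborhood_singleton.2 (hAx.adj i), mem_insert _ _⟩
  have hA : Disjoint A {x} ∧ (neighborhood G A ∩ {x}).Nonempty :=
    ⟨disjoint_singleton_right.2 hAx.notMem, x, hAx.mem_neighborhood, rfl⟩
  refine hG.false_of_pairwise_touching (B := ![A, {x}, C 0, C 1, C 2]) ?_ fun i j hij => ?_
  · simp [Fin.forall_fin_succ, hAx.connected, C, (hZ _).connected_induce_insert]
  · fin_cases i <;> fin_cases j <;>
      first
      | exact absurd hij (by decide)
      | exact hA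
      | exact hAC _
      | exact hxC _
      | exact hC (by decide)

/-- Pairwise links between the `y i` that avoid each other give a `K₅`; two meeting links give a
connected set adjacent to all `y i`, hence a `K₃,₃`. -/
theorem false_of_tripod (hG : HasNoKuratowskiMinor G) (hAx : IsTripod G A x y)
    (hAR : Disjoint A R) (hyR : ∀ i, y i ∈ R)
    (hconn : ∀ i, (G.induce (R \ {x, y i})).Preconnected) : False := by
  have h_ne (i : Fin 3) : i ≠ i + 1 + 1 := by decide +revert
  have hyx (i) : y i ≠ x := (hAx.adj i).ne'
  have hy := hAx.injective
  have hlinks (i : Fin 3) : ∃ Z ⊆ R \ {x, y (i + 1 + 1)}, IsLink G (y i) (y (i + 1)) Z :=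
    exists_isLink (hconn (i + 1 + 1)) ⟨hyR _, by simp [hyx, hy.eq_iff, h_ne]⟩
      ⟨hyR _, by simp [hyx, hy.eq_iff]⟩ (by simp [hy.eq_iff])
  choose Z hZR hZ using hlinks
  have hyZ (i j : Fin 3) : y j ∉ Z i := by
    rcases fin_three_eq_or i j with rfl | rfl | rfl
    exacts [(hZ j).1, (hZ i).2.1, fun h => (hZR i h).2 (Or.inr rfl)]
  have hxZ (i) : x ∉ Z i := fun h => (hZR i h).2 (Or.inl rfl)
  have hAZ (i) : Disjoint A (Z i) := hAR.mono_right fun v hv => (hZR i hv).1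
  by_cases hdisj : ∀ i, Disjoint (Z i) (Z (i + 1))
  · exact hG.false_of_tripod_of_disjoint_links hAx hZ
      (pairwise_fin_three (fun _ _ h => h.symm) hdisj) hyZ hAZ hxZ
  · push Not at hdisj
    obtain ⟨i, hi⟩ := hdisj
    obtain ⟨v, hv, hv'⟩ := Set.not_disjoint_iff.1 hi
    obtain ⟨hconn₀, hy₀, hy₁⟩ := (hZ i).connected_of_nonempty ⟨v, hv⟩
    obtain ⟨hconn₁, -, hy₂⟩ := (hZ (i + 1)).connected_of_nonempty ⟨v, hv'⟩
    refine hG.false_of_tripod_of_connected hAx (C := Z i ∪ Z (i + 1))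
      (SimpleGraph.induce_union_connected hconn₀.preconnected hconn₁.preconnected ⟨v, hv, hv'⟩)
      (disjoint_union_right.2 ⟨hAZ _, hAZ _⟩) (by simp [hxZ]) (by simp [hyZ]) fun j => ?_
    rcases fin_three_eq_or i j with rfl | rfl | rfl
    exacts [neighborhood_mono subset_union_left hy₀, neighborhood_mono subset_union_left hy₁,
      neighborhood_mono subset_union_right hy₂]

end HasNoKuratowskiMinor

end Links

/-! ### Thomassen's induction -/

section ListColoring

variable {W α : Type*} {G : SimpleGraph W} {R R₁ R₂ X : Set W} {L : W → Finset α}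
  {φ φ₁ φ₂ : W → α}

/-- `φ` restricts to a proper coloring of the subgraph induced on `R` from the lists `L`. -/
structure IsListColoring (G : SimpleGraph W) (R : Set W) (L : W → Finset α) (φ : W → α) : Prop where
  mem : ∀ v ∈ R, φ v ∈ L v
  ne : ∀ u ∈ R, ∀ v ∈ R, G.Adj u v → φ u ≠ φ v

theorem IsListColoring.mono (hφ : IsListColoring G R L φ) (h : X ⊆ R) : IsListColoring G X L φ :=
  ⟨fun v hv => hφ.mem v (h hv), fun u hu v hv => hφ.ne u (h hu) v (h hv)⟩

theorem isListColoring_singleton {v : W} (h : φ v ∈ L v) : IsListColoring G {v} L φ :=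
  ⟨by simpa, by simp⟩

/-- Every coloring of `X` from the lists `L` extends to a coloring of `R`. -/
def ExtendsPrecoloring (G : SimpleGraph W) (R X : Set W) (L : W → Finset α) : Prop :=
  ∀ ψ, IsListColoring G X L ψ → ∃ φ, IsListColoring G R L φ ∧ EqOn φ ψ X

theorem ExtendsPrecoloring.of_singleton {v : W} (h : ExtendsPrecoloring G R {v} L)
    (hv : (L v).Nonempty) : ExtendsPrecoloring G R ∅ L := by
  intro ψ _
  obtain ⟨c, hc⟩ := hv
  obtain ⟨φ, hφ, -⟩ := h (fun _ => c) (isListColoring_singleton hc)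
  exact ⟨φ, hφ, eqOn_empty φ ψ⟩

/-- `R` is the union of two proper subsets such that no edge joins `R₁ \ R₂` to `R₂ \ R₁`. -/
structure IsSeparation (G : SimpleGraph W) (R R₁ R₂ : Set W) : Prop where
  union_eq : R₁ ∪ R₂ = R
  left_ssubset : R₁ ⊂ R
  right_ssubset : R₂ ⊂ R
  not_adj : ∀ u ∈ R₁ \ R₂, ∀ v ∈ R₂ \ R₁, ¬ G.Adj u v

namespace IsSeparation

theorem symm (h : IsSeparation G R R₁ R₂) : IsSeparation G R R₂ R₁ :=
  ⟨union_comm R₂ R₁ ▸ h.union_eq, h.right_ssubset, h.left_ssubset,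
    fun u hu v hv huv => h.not_adj v hv u hu huv.symm⟩

theorem subset_or_subset_of_isClique (h : IsSeparation G R R₁ R₂) (hX : G.IsClique X)
    (hXR : X ⊆ R) : X ⊆ R₁ ∨ X ⊆ R₂ := by
  by_contra! hcross
  obtain ⟨v, hv, hv₁⟩ := not_subset.1 hcross.1
  obtain ⟨u, hu, hu₂⟩ := not_subset.1 hcross.2
  have hu₁ : u ∈ R₁ := (h.union_eq.ge (hXR hu)).resolve_right hu₂
  have hv₂ : v ∈ R₂ := (h.union_eq.ge (hXR hv)).resolve_left hv₁
  exact h.not_adj u ⟨hu₁, hu₂⟩ v ⟨hv₂, hv₁⟩ (hX hu hv (ne_of_mem_of_not_mem hu₁ hv₁))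

open Classical in
theorem isListColoring_piecewise (h : IsSeparation G R R₁ R₂) (h₁ : IsListColoring G R₁ L φ₁)
    (h₂ : IsListColoring G R₂ L φ₂) (h₂₁ : EqOn φ₂ φ₁ (R₁ ∩ R₂)) :
    IsListColoring G R L (R₁.piecewise φ₁ φ₂) := by
  have eq₂ {v} (hv : v ∈ R₂) : R₁.piecewise φ₁ φ₂ v = φ₂ v := by
    by_cases hv₁ : v ∈ R₁
    · rw [piecewise_eq_of_mem _ _ _ hv₁, h₂₁ ⟨hv₁, hv⟩]
    · exact piecewise_eq_of_notMem _ _ _ hv₁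
  have eq₁ {v} (hv : v ∈ R₁) : R₁.piecewise φ₁ φ₂ v = φ₁ v := piecewise_eq_of_mem _ _ _ hv
  refine ⟨fun v hv => ?_, fun u hu v hv huv => ?_⟩
  · rcases h.union_eq.ge hv with hv | hv
    · exact (eq₁ hv).symm ▸ h₁.mem v hv
    · exact (eq₂ hv).symm ▸ h₂.mem v hv
  · by_cases both₁ : u ∈ R₁ ∧ v ∈ R₁
    · rw [eq₁ both₁.1, eq₁ both₁.2]
      exact h₁.ne u both₁.1 v both₁.2 huv
    by_cases both₂ : u ∈ R₂ ∧ v ∈ R₂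
    · rw [eq₂ both₂.1, eq₂ both₂.2]
      exact h₂.ne u both₂.1 v both₂.2 huv
    have hu' := h.union_eq.ge hu
    have hv' := h.union_eq.ge hv
    have := h.not_adj u
    have := h.not_adj v
    have := huv.symm
    grind

end IsSeparation

theorem exists_isSeparation_of_not_preconnected {K : Set W} (hK : K ⊆ R)
    (h : ¬ (G.induce (R \ K)).Preconnected) :
    ∃ R₁ R₂, IsSeparation G R R₁ R₂ ∧ R₁ ∩ R₂ = K := by
  simp only [SimpleGraph.Preconnected, not_forall] at h
  obtain ⟨a, b, hab⟩ := h
  let C : Set W := Subtype.val '' {v | (G.induce (R \ K)).Reachable a v}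
  have ha : a.1 ∈ C := mem_image_of_mem _ (SimpleGraph.Reachable.refl a)
  have hb : b.1 ∉ C := by
    rintro ⟨v, hv, hvb⟩
    exact hab (Subtype.ext hvb ▸ hv)
  have hCR : C ⊆ R \ K := by
    rintro _ ⟨v, -, rfl⟩
    exact v.2
  have hC_adj {u v : W} (hu : u ∈ C) (hv : v ∈ R \ K) (huv : G.Adj u v) : v ∈ C := by
    obtain ⟨u, hau, rfl⟩ := hu
    exact ⟨⟨v, hv⟩, hau.trans (SimpleGraph.Adj.reachable huv), rfl⟩
  have hKC : Disjoint K C := disjoint_left.2 fun v hv hvC => (hCR hvC).2 hv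
  refine ⟨K ∪ C, R \ C, ⟨?_, ?_, ?_, ?_⟩, ?_⟩
  · grind
  · exact ⟨by grind, fun hR => by have := hR b.2.1; grind⟩
  · exact ⟨sdiff_subset, fun hR => (hR a.2.1).2 ha⟩
  · grind
  · grind

end ListColoring

section ApexCanvas

variable {W α : Type*} {G : SimpleGraph W} {A R R₁ R₂ X : Set W} {L : W → Finset α} {S : Finset α}
  {φ ψ : W → α} {p v x : W} {c : α}

/-- The setting of Thomassen's induction: the subgraph induced on `R` is to be colored from the
lists `L`, and `X` is a precolored clique. The connected set `A` is the part of the graph already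
removed, which lies in the outer face of `R`: the vertices of `R` adjacent to `A` are those on the
outer boundary. -/
structure IsApexCanvas (G : SimpleGraph W) (A R X : Set W) (L : W → Finset α) : Prop where
  finite : R.Finite
  preconnected : (G.induce A).Preconnected
  disjoint : Disjoint A R
  subset : X ⊆ R
  subset_neighborhood : X ⊆ neighborhood G A
  isClique : G.IsClique X
  three_le_card (v : W) : v ∈ R → v ∉ X → 3 ≤ (L v).card
  five_le_card (v : W) : v ∈ R → v ∉ neighborhood G A → 5 ≤ (L v).card

/-- The induction hypothesis: precolorings extend in every canvas with fewer than `n` vertices. -/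
def ExtendsBelow (α : Type*) (G : SimpleGraph W) (n : ℕ) : Prop :=
  ∀ (A R X : Set W) (L : W → Finset α), R.ncard < n → IsApexCanvas G A R X L →
    ExtendsPrecoloring G R X L

open Classical in
/-- The lists after the colors `S` have been reserved for `v`: they are no longer available at the
neighbors of `v` that are not adjacent to `A`. -/
noncomputable def reserve (G : SimpleGraph W) (A : Set W) (L : W → Finset α) (v : W)
    (S : Finset α) (u : W) : Finset α :=
  if G.Adj v u ∧ u ∉ neighborhood G A then L u \ S else L u

theorem reserve_subset (u : W) : reserve G A L v S u ⊆ L u := by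
  classical
  unfold reserve
  split
  exacts [Finset.sdiff_subset, subset_rfl]

theorem reserve_of_mem_neighborhood {u : W} (hu : u ∈ neighborhood G A) :
    reserve G A L v S u = L u :=
  if_neg fun h => h.2 hu

theorem IsListColoring.update_of_reserve [DecidableEq W]
    (hφ : IsListColoring G (R \ {v}) (reserve G A L v S) φ)
    (hcL : c ∈ L v) (hcS : c ∈ S) (hc : ∀ u ∈ R, G.Adj v u → u ∈ neighborhood G A → φ u ≠ c) :
    IsListColoring G R L (Function.update φ v c) := by
  classical
  have hcv (u : W) (hu : u ∈ R) (hvu : G.Adj v u) : φ u ≠ c := by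
    by_cases huA : u ∈ neighborhood G A
    · exact hc u hu hvu huA
    · have := hφ.mem u ⟨hu, hvu.ne'⟩
      rw [reserve, if_pos ⟨hvu, huA⟩, Finset.mem_sdiff] at this
      exact (ne_of_mem_of_not_mem hcS this.2).symm
  refine ⟨fun u hu => ?_, fun u hu w hw huw => ?_⟩
  · rcases eq_or_ne u v with rfl | huv
    · simpa
    · simpa [huv] using reserve_subset u (hφ.mem u ⟨hu, huv⟩)
  · rcases eq_or_ne u v with rfl | huv
    · simpa [huw.ne'] using (hcv w hw huw).symm
    rcases eq_or_ne w v with rfl | hwv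
    · simpa [huv] using hcv u hu huw.symm
    · simpa [huv, hwv] using hφ.ne u ⟨hu, huv⟩ w ⟨hw, hwv⟩ huw

namespace IsApexCanvas

theorem isListColoring_reserve (h : IsApexCanvas G A R X L) (hψ : IsListColoring G X L ψ) :
    IsListColoring G X (reserve G A L v S) ψ :=
  ⟨fun u hu => by rw [reserve_of_mem_neighborhood (h.subset_neighborhood hu)]; exact hψ.mem u hu,
    hψ.ne⟩

theorem erase (h : IsApexCanvas G A R X L) (hv : (G.induce (insert v A)).Preconnected)
    (hS : S.card ≤ 2) :
    IsApexCanvas G (insert v A) (R \ {v}) (X \ {v}) (reserve G A L v S) where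
  finite := h.finite.sdiff
  preconnected := hv
  disjoint := by
    rw [← union_singleton]
    exact (h.disjoint.mono_right sdiff_subset).union_left disjoint_sdiff_right
  subset := sdiff_subset_sdiff_left h.subset
  subset_neighborhood := sdiff_subset.trans <|
    h.subset_neighborhood.trans (neighborhood_mono (subset_insert v A))
  isClique := h.isClique.subset sdiff_subset
  three_le_card u hu huX := by
    classical
    unfold reserve
    split
    next huv =>
      have := h.five_le_card u hu.1 huv.2
      have := Finset.le_card_sdiff S (L u)
      lia
    next => exact h.three_le_card u hu.1 fun huX' => huX ⟨huX', hu.2⟩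
  five_le_card u hu huvA := by
    have huv : ¬ G.Adj v u := fun huv => huvA ⟨v, mem_insert v A, huv⟩
    rw [reserve, if_neg (huv ·.1)]
    exact h.five_le_card u hu.1 fun huA => huvA (neighborhood_mono (subset_insert v A) huA)

theorem exists_isListColoring_erase (h : IsApexCanvas G A R X L) (ih : ExtendsBelow α G R.ncard)
    (hvR : v ∈ R) (hv : (G.induce (insert v A)).Preconnected) (hS : S.card ≤ 2)
    (hψ : IsListColoring G X L ψ) :
    ∃ φ, IsListColoring G (R \ {v}) (reserve G A L v S) φ ∧ EqOn φ ψ (X \ {v}) :=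
  ih _ _ _ _ (ncard_sdiff_singleton_lt_of_mem hvR h.finite) (h.erase hv hS) ψ
    ((h.isListColoring_reserve hψ).mono sdiff_subset)

theorem extendsPrecoloring_of_isSeparation (h : IsApexCanvas G A R X L)
    (ih : ExtendsBelow α G R.ncard) (hR : IsSeparation G R R₁ R₂) (hK : G.IsClique (R₁ ∩ R₂))
    (hKA : R₁ ∩ R₂ ⊆ neighborhood G A) : ExtendsPrecoloring G R X L := by
  wlog hX : X ⊆ R₁ generalizing R₁ R₂
  · rw [inter_comm] at hK hKA
    exact this hR.symm hK hKA
      ((hR.subset_or_subset_of_isClique h.isClique h.subset).resolve_left hX)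
  intro ψ hψ
  have h₁ : IsApexCanvas G A R₁ X L :=
    { h with
      finite := h.finite.subset hR.left_ssubset.subset
      disjoint := h.disjoint.mono_right hR.left_ssubset.subset
      subset := hX
      three_le_card := fun v hv => h.three_le_card v (hR.left_ssubset.subset hv)
      five_le_card := fun v hv => h.five_le_card v (hR.left_ssubset.subset hv) }
  have h₂ : IsApexCanvas G A R₂ (R₁ ∩ R₂) L :=
    { h with
      finite := h.finite.subset hR.right_ssubset.subset
      disjoint := h.disjoint.mono_right hR.right_ssubset.subset
      subset := inter_subset_right
      subset_neighborhood := hKA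
      isClique := hK
      three_le_card := fun v hv hvK =>
        h.three_le_card v (hR.right_ssubset.subset hv) fun hvX => hvK ⟨hX hvX, hv⟩
      five_le_card := fun v hv => h.five_le_card v (hR.right_ssubset.subset hv) }
  obtain ⟨φ₁, hφ₁, hφ₁ψ⟩ := ih _ _ _ _ (ncard_lt_ncard hR.left_ssubset h.finite) h₁ ψ hψ
  obtain ⟨φ₂, hφ₂, hφ₂₁⟩ := ih _ _ _ _ (ncard_lt_ncard hR.right_ssubset h.finite) h₂ φ₁
    (hφ₁.mono inter_subset_left)
  classical
  exact ⟨R₁.piecewise φ₁ φ₂, hR.isListColoring_piecewise hφ₁ hφ₂ hφ₂₁,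
    fun v hv => (piecewise_eq_of_mem _ _ _ (hX hv)).trans (hφ₁ψ hv)⟩

/-- Otherwise two outer vertices joined by an edge separate `R`. -/
theorem ncard_outer_neighbors_le_two (hG : HasNoKuratowskiMinor G) (h : IsApexCanvas G A R X L)
    (ih : ExtendsBelow α G R.ncard) (hext : ¬ ExtendsPrecoloring G R X L) (hx : x ∈ R)
    (hxA : x ∈ neighborhood G A) : (R ∩ neighborhood G A ∩ neighborhood G {x}).ncard ≤ 2 := by
  by_contra! hcard
  have hfin : (R ∩ neighborhood G A ∩ neighborhood G {x}).Finite :=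
    (h.finite.inter_of_left _).inter_of_left _
  obtain ⟨y₀, y₁, y₂, h₀, h₁, h₂, h₀₁, h₀₂, h₁₂⟩ := (two_lt_ncard_iff hfin).1 hcard
  let y := ![y₀, y₁, y₂]
  have hy (i) : y i ∈ R ∩ neighborhood G A ∩ neighborhood G {x} := by
    fin_cases i
    exacts [h₀, h₁, h₂]
  have hyx (i) : G.Adj x (y i) := mem_neighborhood_singleton.1 (hy i).2
  have hAx : IsTripod G A x y := {
    connected := by
      obtain ⟨a, ha, -⟩ := hxA
      have : Nonempty A := ⟨⟨a, ha⟩⟩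
      exact ⟨h.preconnected⟩
    notMem := h.disjoint.notMem_of_mem_right hx
    mem_neighborhood := hxA
    injective := by
      simp [Function.Injective, Fin.forall_fin_succ, y, h₀₁, h₀₂, h₁₂, h₀₁.symm, h₀₂.symm, h₁₂.symm]
    apply_notMem := fun i => h.disjoint.notMem_of_mem_right (hy i).1.1
    apply_mem_neighborhood := fun i => (hy i).1.2
    adj := hyx }
  refine hG.false_of_tripod hAx h.disjoint (fun i => (hy i).1.1) fun i => ?_
  by_contra hconn
  obtain ⟨R₁, R₂, hR, hK⟩ :=
    exists_isSeparation_of_not_preconnected (pair_subset hx (hy i).1.1) hconn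
  refine hext (h.extendsPrecoloring_of_isSeparation ih hR ?_ ?_) <;> rw [hK]
  · simpa using fun _ => hyx i
  · exact pair_subset hxA (hy i).1.2

theorem extendsPrecoloring_insert_of_forall_mem (h : IsApexCanvas G A R X L)
    (ih : ExtendsBelow α G R.ncard) (hvR : v ∈ R) (hv : (G.induce (insert v A)).Preconnected)
    (hX : ∀ u ∈ R, G.Adj v u → u ∈ neighborhood G A → u ∈ X) :
    ExtendsPrecoloring G R (insert v X) L := by
  classical
  intro ψ hψ
  have hvX : v ∈ insert v X := mem_insert v X
  have hcard : ({ψ v} : Finset α).card ≤ 2 := by simp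
  obtain ⟨φ, hφ, hφψ⟩ :=
    h.exists_isListColoring_erase ih hvR hv hcard (hψ.mono (subset_insert v X))
  refine ⟨Function.update φ v (ψ v),
    hφ.update_of_reserve (hψ.mem v hvX) (Finset.mem_singleton_self _) fun u hu hvu huA => ?_,
    fun u hu => ?_⟩
  · rw [hφψ ⟨hX u hu hvu huA, hvu.ne'⟩]
    exact hψ.ne u (mem_insert_of_mem v (hX u hu hvu huA)) v hvX hvu.symm
  · rcases eq_or_ne u v with rfl | huv
    · simp
    · rw [Function.update_of_ne huv, hφψ ⟨hu.resolve_left huv, huv⟩]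

/-- At most one outer neighbor of `v` besides `p` can interfere with the two colors reserved for
`v`. -/
theorem extendsPrecoloring_of_adj (h : IsApexCanvas G A R X L)
    (ih : ExtendsBelow α G R.ncard) (hp : p ∈ X) (hvR : v ∈ R) (hvA : v ∈ neighborhood G A)
    (hvX : v ∉ X) (hpv : G.Adj p v)
    (hN : (R ∩ neighborhood G A ∩ neighborhood G {v}).ncard ≤ 2) : ExtendsPrecoloring G R X L := by
  classical
  intro ψ hψ
  have hLv : 2 ≤ ((L v).erase (ψ p)).card := by
    have := h.three_le_card v hvR hvX
    have := Finset.pred_card_le_card_erase (s := L v) (a := ψ p)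
    lia
  obtain ⟨S, hSL, hS⟩ := Finset.exists_subset_card_eq hLv
  have hconn := (connected_induce_insert_of_mem_neighborhood h.preconnected hvA).preconnected
  obtain ⟨φ, hφ, hφψ⟩ := h.exists_isListColoring_erase ih hvR hconn hS.le hψ
  rw [sdiff_singleton_eq_self hvX] at hφψ
  let N : Set W := R ∩ neighborhood G A ∩ neighborhood G {v}
  have hNfin : N.Finite := (h.finite.inter_of_left _).inter_of_left _
  have hpN : p ∈ N :=
    ⟨⟨h.subset hp, h.subset_neighborhood hp⟩, mem_neighborhood_singleton.2 hpv.symm⟩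
  have hused : (φ '' (N \ {p})).ncard < (S : Set α).ncard := by
    have := ncard_image_le (f := φ) (hNfin.sdiff (t := {p}))
    have := ncard_sdiff_singleton_lt_of_mem hpN hNfin
    rw [ncard_coe_finset]
    lia
  obtain ⟨c, hcS, hc⟩ := exists_mem_notMem_of_ncard_lt_ncard hused (hNfin.sdiff.image φ)
  have hcL := Finset.mem_erase.1 (hSL hcS)
  refine ⟨Function.update φ v c, hφ.update_of_reserve hcL.2 hcS fun u hu hvu huA => ?_,
    fun u hu => ?_⟩
  · rcases eq_or_ne u p with rfl | hup
    · rw [hφψ hp]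
      exact hcL.1.symm
    · rintro rfl
      exact hc ⟨u, ⟨⟨⟨hu, huA⟩, mem_neighborhood_singleton.2 hvu⟩, hup⟩, rfl⟩
  · rw [Function.update_of_ne (ne_of_mem_of_not_mem hu hvX), hφψ hu]

theorem extendsPrecoloring_of_nonempty (hG : HasNoKuratowskiMinor G) (h : IsApexCanvas G A R X L)
    (ih : ExtendsBelow α G R.ncard) (hX : X.Nonempty) : ExtendsPrecoloring G R X L := by
  obtain ⟨p, hp⟩ := hX
  by_cases hpX : ∀ v ∈ R, G.Adj p v → v ∈ neighborhood G A → v ∈ X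
  · have hconn := connected_induce_insert_of_mem_neighborhood h.preconnected
      (h.subset_neighborhood hp)
    simpa [insert_eq_of_mem hp] using
      h.extendsPrecoloring_insert_of_forall_mem ih (h.subset hp) hconn.preconnected hpX
  · push Not at hpX
    obtain ⟨v, hvR, hpv, hvA, hvX⟩ := hpX
    by_contra hext
    exact hext (h.extendsPrecoloring_of_adj ih hp hvR hvA hvX hpv
      (h.ncard_outer_neighbors_le_two hG ih hext hvR hvA))

theorem extendsPrecoloring_of_empty (hG : HasNoKuratowskiMinor G) (h : IsApexCanvas G A R ∅ L)
    (ih : ExtendsBelow α G R.ncard) : ExtendsPrecoloring G R ∅ L := by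
  have hL {v : W} (hv : v ∈ R) : (L v).Nonempty :=
    Finset.card_pos.1 (by have := h.three_le_card v hv (notMem_empty v); lia)
  by_cases hout : ∃ v ∈ R, v ∈ neighborhood G A
  · obtain ⟨v, hv, hvA⟩ := hout
    have hv_canvas : IsApexCanvas G A R {v} L :=
      { h with
        subset := by simpa
        subset_neighborhood := by simpa
        isClique := by simp
        three_le_card := fun u hu _ => h.three_le_card u hu (notMem_empty u) }
    have hv_ext := hv_canvas.extendsPrecoloring_of_nonempty hG ih (singleton_nonempty v)
    exact hv_ext.of_singleton (hL hv)
  push Not at hout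
  rcases R.eq_empty_or_nonempty with rfl | ⟨v, hv⟩
  · exact fun ψ hψ => ⟨ψ, hψ, eqOn_refl ψ ∅⟩
  have h_empty : IsApexCanvas G ∅ R ∅ L :=
    { h with
      preconnected := SimpleGraph.Preconnected.of_subsingleton
      disjoint := empty_disjoint R
      subset_neighborhood := empty_subset _
      five_le_card := fun u hu _ => h.five_le_card u hu (hout u hu) }
  have hv_ext : ExtendsPrecoloring G R (insert v ∅) L := by
    refine h_empty.extendsPrecoloring_insert_of_forall_mem ih hv ?_ ?_
    · rw [insert_empty_eq]
      exact connected_induce_singleton.preconnected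
    · rintro u - - ⟨a, ha, -⟩
      exact ha
  rw [insert_empty_eq] at hv_ext
  exact hv_ext.of_singleton (hL hv)

theorem extendsPrecoloring (hG : HasNoKuratowskiMinor G) (h : IsApexCanvas G A R X L) :
    ExtendsPrecoloring G R X L := by
  induction hn : R.ncard using Nat.strong_induction_on generalizing A R X L with
  | _ n ih =>
    subst hn
    have ih' : ExtendsBelow α G R.ncard := fun _ _ _ _ hlt h' => ih _ hlt h' rfl
    rcases X.eq_empty_or_nonempty with rfl | hX
    · exact h.extendsPrecoloring_of_empty hG ih'
    · exact h.extendsPrecoloring_of_nonempty hG ih' hX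

end IsApexCanvas

end ApexCanvas

/-! ### The outer face of a plane graph -/

section UnboundedComponent

variable {E : Type*} [NormedAddCommGroup E] [NormedSpace ℝ E]

open Metric

theorem isPreconnected_compl_closedBall (h : 1 < Module.rank ℝ E) (x : E) {r : ℝ} (hr : 0 ≤ r) :
    IsPreconnected (closedBall x r)ᶜ := by
  have hpolar : (closedBall x r)ᶜ =
      (fun p : ℝ × E => x + p.1 • p.2) '' (Ioi r ×ˢ sphere 0 1) := by
    ext y
    simp only [mem_compl_iff, mem_closedBall, not_le, mem_image, mem_prod, mem_Ioi,
      mem_sphere_zero_iff_norm, Prod.exists]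
    refine ⟨fun hy => ?_, ?_⟩
    · have hnorm : 0 < ‖y - x‖ := by rw [← dist_eq_norm]; exact hr.trans_lt hy
      exact ⟨‖y - x‖, ‖y - x‖⁻¹ • (y - x), ⟨by rwa [← dist_eq_norm], by
        simp [norm_smul, hnorm.ne']⟩, by simp [smul_smul, hnorm.ne']⟩
    · rintro ⟨t, u, ⟨ht, hu⟩, rfl⟩
      simpa [norm_smul, hu] using ht.trans_le (le_abs_self t)
  rw [hpolar]
  exact (isPreconnected_Ioi.prod (isPreconnected_sphere h 0 1)).image _ (by fun_prop)

theorem isPathConnected_setOf_not_isBounded_connectedComponentIn (h : 1 < Module.rank ℝ E)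
    {K : Set E} (hK : IsClosed K) (hK_bdd : Bornology.IsBounded K) :
    IsPathConnected {p | p ∉ K ∧ ¬ Bornology.IsBounded (connectedComponentIn Kᶜ p)} := by
  obtain ⟨r, hr, hKr⟩ := hK_bdd.subset_closedBall_lt 0 0
  have : Nontrivial E := rank_pos_iff_nontrivial.1 (zero_lt_one.trans h)
  have hfar : ¬ Bornology.IsBounded (closedBall (0 : E) r)ᶜ := fun hb =>
    NormedSpace.unbounded_univ ℝ E (union_compl_self (closedBall (0 : E) r) ▸
      isBounded_closedBall.union hb)
  obtain ⟨q, hq⟩ : (closedBall (0 : E) r)ᶜ.Nonempty := by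
    by_contra! hempty
    exact hfar (hempty ▸ Bornology.isBounded_empty)
  have hqK : (closedBall (0 : E) r)ᶜ ⊆ connectedComponentIn Kᶜ q :=
    (isPreconnected_compl_closedBall h 0 hr.le).subset_connectedComponentIn hq
      (compl_subset_compl.2 hKr)
  have hset : {p | p ∉ K ∧ ¬ Bornology.IsBounded (connectedComponentIn Kᶜ p)} =
      connectedComponentIn Kᶜ q := by
    ext p
    refine ⟨fun ⟨hpK, hp⟩ => ?_, fun hp => ⟨connectedComponentIn_subset _ _ hp, ?_⟩⟩
    · obtain ⟨z, hzp, hz⟩ : (connectedComponentIn Kᶜ p ∩ (closedBall 0 r)ᶜ).Nonempty :=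
        inter_compl_nonempty_iff.2 fun hsub => hp (isBounded_closedBall.subset hsub)
      rw [connectedComponentIn_eq (hqK hz), ← connectedComponentIn_eq hzp]
      exact mem_connectedComponentIn hpK
    · rw [← connectedComponentIn_eq hp]
      exact fun hb => hfar (hb.subset hqK)
  rw [hset]
  exact hK.isOpen_compl.connectedComponentIn.isConnected_iff_isPathConnected.1
    (isConnected_connectedComponentIn_iff.2 (compl_subset_compl.2 hKr hq))

end UnboundedComponent

section Cone

variable {W : Type*} {G : SimpleGraph W} {T : Set W} {X : Type*} [TopologicalSpace X]

/-- The graph `G` together with a new vertex `none` adjacent to the vertices in `T`. -/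
def coneGraph (G : SimpleGraph W) (T : Set W) : SimpleGraph (Option W) where
  Adj
    | some u, some v => G.Adj u v
    | some u, none => u ∈ T
    | none, some v => v ∈ T
    | none, none => False
  symm := ⟨by
    rintro (_ | u) (_ | v) h
    exacts [h, h, h, h.symm]⟩
  loopless := ⟨by
    rintro (_ | u) h
    exacts [h, G.irrefl h]⟩

/-- A weak drawing of `coneGraph G T` in which `none` is placed at `apex` and the edge from `none`
to `b` is `F b`. -/
def WeakDrawing.cone (D : WeakDrawing G X) (apex : X) (F : W → Set X)
    (apex_ne : ∀ v, apex ≠ D.pos v) (apex_notMem : ∀ u v, G.Adj u v → apex ∉ D.edge u v)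
    (joinedIn : ∀ b ∈ T, JoinedIn (F b) apex (D.pos b))
    (pos_notMem : ∀ b ∈ T, ∀ v ≠ b, D.pos v ∉ F b)
    (disjoint : ∀ b ∈ T, ∀ u ≠ b, ∀ v ≠ b, G.Adj u v → Disjoint (F b) (D.edge u v)) :
    WeakDrawing (coneGraph G T) X where
  pos v := v.elim apex D.pos
  edge
    | some u, some v => D.edge u v
    | some b, none => F b
    | none, some b => F b
    | none, none => ∅
  pos_injective := by
    rintro (_ | u) (_ | v) h
    exacts [rfl, (apex_ne v h).elim, (apex_ne u h.symm).elim, congrArg some (D.pos_injective h)]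
  joinedIn := by
    rintro (_ | u) (_ | v) h
    exacts [h.elim, joinedIn v h, (joinedIn u h).symm, D.joinedIn h]
  pos_notMem_edge := by
    rintro (_ | u) (_ | v) (_ | w) h hu hv
    all_goals try contradiction
    · exact pos_notMem v h w fun hwv => hv (congrArg some hwv)
    · exact pos_notMem u h w fun hwu => hu (congrArg some hwu)
    · exact apex_notMem u v h
    · exact D.pos_notMem_edge h (by simpa using hu) (by simpa using hv)
  disjoint_edge := by
    have hne {a b : W} (h : some a ≠ some b) : a ≠ b := mt (congrArg some) h
    rintro (_ | u) (_ | v) (_ | x) (_ | y) huv hxy hux huy hvx hvy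
    all_goals try contradiction
    · exact disjoint v huv x (hne hvx).symm y (hne hvy).symm hxy
    · exact disjoint u huv x (hne hux).symm y (hne huy).symm hxy
    · exact (disjoint y hxy u (hne huy) v (hne hvy) huv).symm
    · exact (disjoint x hxy u (hne hux) v (hne hvx) huv).symm
    · exact D.disjoint_edge huv hxy (hne hux) (hne huy) (hne hvx) (hne hvy)

end Cone

namespace PlaneGraph

variable {V : Type u} (G : PlaneGraph V) {u v b : V}

theorem arc_subset_image (h : G.Adj u v) : G.arc s(u, v) ⊆ G.image :=
  fun _ hp => Or.inr (mem_iUnion₂.2 ⟨u, v, mem_iUnion.2 ⟨h, hp⟩⟩)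

theorem pos_mem_image (hv : v ∈ G.verts) : G.pos v ∈ G.image :=
  Or.inl (mem_image_of_mem G.pos hv)

theorem isCompact_arc (h : G.Adj u v) : IsCompact (G.arc s(u, v)) := by
  obtain ⟨f, hf, -, hfarc, -⟩ := G.arc_arc u v h
  exact hfarc ▸ isCompact_Icc.image_of_continuousOn hf

theorem joinedIn_arc (h : G.Adj u v) : JoinedIn (G.arc s(u, v)) (G.pos u) (G.pos v) := by
  obtain ⟨f, hf, -, hfarc, hf₀, hf₁⟩ := G.arc_arc u v h
  exact JoinedIn.ofLine hf hf₀ hf₁ hfarc.subset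

theorem isCompact_image : IsCompact G.image := by
  have hfin : {p : V × V | G.Adj p.1 p.2}.Finite :=
    (G.finite_verts.prod G.finite_verts).subset fun p h =>
      ⟨G.adj_mem _ _ h, G.adj_mem _ _ (G.adj_symm _ _ h)⟩
  have hunion : G.image =
      G.pos '' G.verts ∪ ⋃ p ∈ {p : V × V | G.Adj p.1 p.2}, G.arc s(p.1, p.2) := by
    simp [image, iUnion_prod']
  rw [hunion]
  exact (G.finite_verts.image _).isCompact.union
    (hfin.isCompact_biUnion fun p h => G.isCompact_arc h)

theorem isPathConnected_outerFace : IsPathConnected G.outerFace :=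
  isPathConnected_setOf_not_isBounded_connectedComponentIn (by simp [one_add_one_eq_two])
    G.isCompact_image.isClosed G.isCompact_image.isBounded

theorem image_deleteVerts_subset (s : Set V) : (G.deleteVerts s).image ⊆ G.image := by
  refine union_subset_union (image_mono sdiff_subset) ?_
  exact iUnion_mono fun u => iUnion_mono fun v => iUnion_mono' fun h => ⟨h.1, subset_rfl⟩

theorem pos_notMem_image_deleteVerts (hb : b ∈ G.verts) :
    G.pos b ∉ (G.deleteVerts {b}).image := by
  rintro (⟨w, ⟨hw, hwb⟩, hpos⟩ | h)
  · exact hwb (G.pos_injOn hw hb hpos)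
  · simp only [mem_iUnion] at h
    obtain ⟨u, v, ⟨huv, hu, hv⟩, h⟩ := h
    rcases G.arc_avoid u v huv b hb h with rfl | rfl
    exacts [hu rfl, hv rfl]

theorem joinedIn_compl_image_deleteVerts {p : ℝ × ℝ} (hp : p ∈ G.outerFace) (hb : b ∈ G.verts)
    (hout : G.OnOuter b) : JoinedIn (G.deleteVerts {b}).imageᶜ p (G.pos b) := by
  have hface : G.outerFace ⊆ (G.deleteVerts {b}).imageᶜ := fun q hq h =>
    hq.1 (G.image_deleteVerts_subset {b} h)
  obtain ⟨ε, hε, hball⟩ := Metric.isOpen_iff.1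
    (G.deleteVerts {b}).isCompact_image.isClosed.isOpen_compl _ (G.pos_notMem_image_deleteVerts hb)
  obtain ⟨q, hq, hqb⟩ := Metric.mem_closure_iff.1 (frontier_subset_closure hout) ε hε
  have hpq := (G.isPathConnected_outerFace.joinedIn p hp q hq).mono hface
  have hball_conn := (convex_ball (G.pos b) ε).isPathConnected ⟨_, Metric.mem_ball_self hε⟩
  exact hpq.trans <|
    (hball_conn.joinedIn q (Metric.mem_ball'.2 hqb) _ (Metric.mem_ball_self hε)).mono hball

/-- The graph underlying a plane graph. -/
def toSimpleGraph : SimpleGraph G.verts where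
  Adj u v := G.Adj u v
  symm := ⟨fun _ _ h => G.adj_symm _ _ h⟩
  loopless := ⟨fun _ h => G.adj_irrefl _ h⟩

theorem disjoint_arc {u v x y : V} (huv : G.Adj u v) (hxy : G.Adj x y) (hux : u ≠ x) (huy : u ≠ y)
    (hvx : v ≠ x) (hvy : v ≠ y) : Disjoint (G.arc s(u, v)) (G.arc s(x, y)) := by
  have hends : ({u, v} : Set V) ∩ {x, y} = ∅ := by grind
  have hne : s(u, v) ≠ s(x, y) := by simp [hux, huy]
  simpa [hends, disjoint_iff_inter_eq_empty] using G.arc_meet u v x y huv hxy hne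

/-- A plane graph, seen as a weak drawing of its underlying graph. -/
def weakDrawing : WeakDrawing G.toSimpleGraph (ℝ × ℝ) where
  pos v := G.pos v
  edge u v := G.arc s(u.1, v.1)
  pos_injective := G.pos_injOn.injective
  joinedIn _ _ h := G.joinedIn_arc h
  pos_notMem_edge u v w h hu hv hw := by
    rcases G.arc_avoid u v h w w.2 hw with h | h
    exacts [hu (Subtype.ext h), hv (Subtype.ext h)]
  disjoint_edge _ _ _ _ huv hxy hux huy hvx hvy :=
    G.disjoint_arc huv hxy (Subtype.coe_ne_coe.2 hux) (Subtype.coe_ne_coe.2 huy)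
      (Subtype.coe_ne_coe.2 hvx) (Subtype.coe_ne_coe.2 hvy)

/-- A new vertex in the outer face can be joined to all outer vertices. -/
theorem hasNoKuratowskiMinor_coneGraph :
    HasNoKuratowskiMinor (coneGraph G.toSimpleGraph {v | G.OnOuter v}) := by
  obtain ⟨p, hp⟩ := G.isPathConnected_outerFace.nonempty
  let D : WeakDrawing (coneGraph G.toSimpleGraph {v | G.OnOuter v}) (ℝ × ℝ) :=
    G.weakDrawing.cone p (fun b => (G.deleteVerts {b.1}).imageᶜ)
      (fun v hpv => hp.1 (hpv ▸ G.pos_mem_image v.2))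
      (fun u v h hpe => hp.1 (G.arc_subset_image h hpe))
      (fun b hb => G.joinedIn_compl_image_deleteVerts hp b.2 hb)
      (fun b _ v hv => not_notMem.2 <|
        (G.deleteVerts {b.1}).pos_mem_image ⟨v.2, Subtype.coe_ne_coe.2 hv⟩)
      (fun b _ u hu v hv h => disjoint_compl_left.mono_right <|
        (G.deleteVerts {b.1}).arc_subset_image
          ⟨h, Subtype.coe_ne_coe.2 hu, Subtype.coe_ne_coe.2 hv⟩)
  let e := Complex.equivRealProdCLM.symm
  exact (D.map e e.continuous e.injective).hasNoKuratowskiMinor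

end PlaneGraph

section Canvas

variable {V : Type u} {G : PlaneGraph V} {S : Set V} {SAdj : V → V → Prop} {L : V → Finset ℕ}

theorem IsCanvas.isApexCanvas (h : IsCanvas G S SAdj L) (hS : S.Pairwise SAdj) :
    IsApexCanvas (coneGraph G.toSimpleGraph {v | G.OnOuter v}) {none} {none}ᶜ
      (some '' {v : G.verts | v.1 ∈ S}) (fun v => v.elim ∅ fun v => L v) where
  finite := by
    have := G.finite_verts.to_subtype
    exact toFinite _
  preconnected := connected_induce_singleton.preconnected
  disjoint := disjoint_compl_right
  subset := by
    rintro _ ⟨v, -, rfl⟩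
    simp
  subset_neighborhood := by
    rintro _ ⟨v, hv, rfl⟩
    exact mem_neighborhood_singleton.2 (h.sverts_outer v hv)
  isClique := by
    rintro _ ⟨u, hu, rfl⟩ _ ⟨v, hv, rfl⟩ huv
    exact h.sadj_sub u v (hS hu hv fun heq => huv (congrArg some (Subtype.ext heq)))
  three_le_card := by
    rintro (_ | v) hv hvS
    · exact (hv rfl).elim
    · exact h.card_outside_S v v.2 fun hvS' => hvS (mem_image_of_mem some hvS')
  five_le_card := by
    rintro (_ | v) hv hvA
    · exact (hv rfl).elim
    · exact h.card_inner v v.2 fun hout => hvA (mem_neighborhood_singleton.2 hout)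

theorem canvas_path_length_one_colorable_general (h : IsCanvas G S SAdj L) (hS : S.Pairwise SAdj)
    {ψ : V → ℕ} (hψL : ∀ v ∈ S, ψ v ∈ L v) (hψ : ∀ u v, SAdj u v → ψ u ≠ ψ v) :
    ∃ φ : V → ℕ, (∀ v ∈ G.verts, φ v ∈ L v) ∧ (∀ u v, G.Adj u v → φ u ≠ φ v) ∧ EqOn φ ψ S := by
  classical
  let ψ' (v : Option G.verts) : ℕ := v.elim 0 fun v => ψ v
  have hψ' : IsListColoring (coneGraph G.toSimpleGraph {v | G.OnOuter v})
      (some '' {v : G.verts | v.1 ∈ S}) (fun v => v.elim ∅ fun v => L v) ψ' := by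
    constructor
    · rintro _ ⟨v, hv, rfl⟩
      exact hψL v hv
    · rintro _ ⟨u, hu, rfl⟩ _ ⟨v, hv, rfl⟩ huv
      exact hψ u v (hS hu hv fun heq => huv.ne (congrArg some (Subtype.ext heq)))
  obtain ⟨φ, hφ, hφψ⟩ :=
    (h.isApexCanvas hS).extendsPrecoloring G.hasNoKuratowskiMinor_coneGraph ψ' hψ'
  let φ' (v : V) : ℕ := if hv : v ∈ G.verts then φ (some ⟨v, hv⟩) else 0
  have hφ' {v : V} (hv : v ∈ G.verts) : φ' v = φ (some ⟨v, hv⟩) := dif_pos hv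
  refine ⟨φ', fun v hv => ?_, fun u v huv => ?_, fun v hv => ?_⟩
  · rw [hφ' hv]
    exact hφ.mem (some ⟨v, hv⟩) (by simp)
  · rw [hφ' (G.adj_mem u v huv), hφ' (G.adj_mem v u (G.adj_symm u v huv))]
    exact hφ.ne _ (by simp) _ (by simp) huv
  · rw [hφ' (h.sverts_sub hv)]
    exact hφψ (mem_image_of_mem some hv)

theorem pairwise_pathAdj (p1 p2 : V) : ({p1, p2} : Set V).Pairwise (pathAdj p1 p2) := by
  rintro u (rfl | rfl) v (rfl | rfl) huv
  exacts [(huv rfl).elim, .inl ⟨rfl, rfl⟩, .inr ⟨rfl, rfl⟩, (huv rfl).elim]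

end Canvas

/-- Theorem 2.2: if `(G, S, L)` is a canvas and `S` is a path of
length one, then `G` has an `L`-coloring. -/
theorem canvas_path_length_one_colorable {V : Type u} (G : PlaneGraph V)
    (p1 p2 : V) (L : V → Finset ℕ)
    (h : IsPathCanvas G p1 p2 L) :
    G.HasLColoring L := by
  obtain ⟨ψ, hψL, hψ⟩ := h.2.scolorable
  obtain ⟨φ, hφL, hφ, -⟩ :=
    canvas_path_length_one_colorable_general h.2 (pairwise_pathAdj p1 p2) hψL hψ
  exact ⟨φ, hφL, hφ⟩
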